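/- arXiv:1810.02803 — 12 statements merged into one kernel-verified Lean document; each statement's English description precedes it below -/
import Mathlib

section
/- Let R be the ℂ-subalgebra of the polynomial ring ℂ[x,y,z] generated by {q, r₁, r₂, r₃, r₄}. Then the four polynomials z, x + y, xz + y, and xy all belong to R. -/
/-!
With `s = x + y`, `u = xz + y`, `p = xy`, the generators read `q = (3/4)(z - 9)`, `r₁ = s + z + 1`,
`r₂ = s² - 2p + 6u + z² + 1` and `r₄ = p - u + z`. The first two give `z` and `s`; then `r₂` and
`r₄` are an invertible linear system for `u` and `p`.
-/

open MvPolynomial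

/-- `q := (3/4)·(z − 9)` in `ℂ[x,y,z]`, with `x = X 0`, `y = X 1`, `z = X 2`. -/
noncomputable def qPoly : MvPolynomial (Fin 3) ℂ := C (3 / 4 : ℂ) * (X 2 - C 9)

/-- `r₁ := x + y + z + 1`. -/
noncomputable def r1Poly : MvPolynomial (Fin 3) ℂ := X 0 + X 1 + X 2 + 1

/-- `r₂ := x² + 6zx + z² + y² + 6y + 1`. -/
noncomputable def r2Poly : MvPolynomial (Fin 3) ℂ :=
  X 0 ^ 2 + 6 * X 2 * X 0 + X 2 ^ 2 + X 1 ^ 2 + 6 * X 1 + 1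

/-- `r₃ := x³ + 15zx² + 15z²x + z³ + y³ + 15y² + 15y + 1`. -/
noncomputable def r3Poly : MvPolynomial (Fin 3) ℂ :=
  X 0 ^ 3 + 15 * X 2 * X 0 ^ 2 + 15 * X 2 ^ 2 * X 0 + X 2 ^ 3 +
    X 1 ^ 3 + 15 * X 1 ^ 2 + 15 * X 1 + 1

/-- `r₄ := (x − 1)(y − z)`. -/
noncomputable def r4Poly : MvPolynomial (Fin 3) ℂ := (X 0 - 1) * (X 1 - X 2)

/-- `R` is the ℂ-subalgebra of `ℂ[x,y,z]` generated by `q, r₁, r₂, r₃, r₄`. -/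
noncomputable def Rsub : Subalgebra ℂ (MvPolynomial (Fin 3) ℂ) :=
  Algebra.adjoin ℂ {qPoly, r1Poly, r2Poly, r3Poly, r4Poly}

/-- The polynomials `z`, `x + y`, `xz + y` and `xy` all belong to `R`. -/
theorem stmt_0 :
    (X 2 : MvPolynomial (Fin 3) ℂ) ∈ Rsub ∧
    (X 0 + X 1 : MvPolynomial (Fin 3) ℂ) ∈ Rsub ∧
    (X 0 * X 2 + X 1 : MvPolynomial (Fin 3) ℂ) ∈ Rsub ∧
    (X 0 * X 1 : MvPolynomial (Fin 3) ℂ) ∈ Rsub := by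
  have hq : qPoly ∈ Rsub := Algebra.subset_adjoin (by simp)
  have h1 : r1Poly ∈ Rsub := Algebra.subset_adjoin (by simp)
  have h2 : r2Poly ∈ Rsub := Algebra.subset_adjoin (by simp)
  have h4 : r4Poly ∈ Rsub := Algebra.subset_adjoin (by simp)
  have hC (c : ℂ) : (C c : MvPolynomial (Fin 3) ℂ) ∈ Rsub := Rsub.algebraMap_mem c
  have hz : (X 2 : MvPolynomial (Fin 3) ℂ) ∈ Rsub := by
    have e : (X 2 : MvPolynomial (Fin 3) ℂ) = C (4 / 3) * qPoly + C 9 := by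
      rw [qPoly, ← mul_assoc, ← C_mul]
      norm_num
    rw [e]
    exact add_mem (mul_mem (hC _) hq) (hC _)
  have hs : (X 0 + X 1 : MvPolynomial (Fin 3) ℂ) ∈ Rsub := by
    have e : (X 0 + X 1 : MvPolynomial (Fin 3) ℂ) = r1Poly - X 2 - 1 := by
      rw [r1Poly]
      ring
    rw [e]
    exact sub_mem (sub_mem h1 hz) (one_mem _)
  -- `r₂ = s² - 2xy + 6u + z² + 1` and `r₄ = xy - u + z`, where `s = x + y` and `u = xz + y`;
  -- eliminating `xy` leaves `4u`.
  have hu : (X 0 * X 2 + X 1 : MvPolynomial (Fin 3) ℂ) ∈ Rsub := by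
    have e4 : (4 * (X 0 * X 2 + X 1) : MvPolynomial (Fin 3) ℂ) =
        r2Poly - (X 0 + X 1) ^ 2 - X 2 ^ 2 - 1 + ((r4Poly - X 2) + (r4Poly - X 2)) := by
      rw [r2Poly, r4Poly]
      ring
    have m4 : (4 * (X 0 * X 2 + X 1) : MvPolynomial (Fin 3) ℂ) ∈ Rsub := by
      rw [e4]
      have h := sub_mem h4 hz
      exact add_mem (sub_mem (sub_mem (sub_mem h2 (pow_mem hs 2)) (pow_mem hz 2)) (one_mem _))
        (add_mem h h)
    have e : (X 0 * X 2 + X 1 : MvPolynomial (Fin 3) ℂ) =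
        C (1 / 4) * (4 * (X 0 * X 2 + X 1)) := by
      rw [← mul_assoc, show (4 : MvPolynomial (Fin 3) ℂ) = C 4 from rfl, ← C_mul]
      norm_num
    rw [e]
    exact mul_mem (hC _) m4
  refine ⟨hz, hs, hu, ?_⟩
  have e : (X 0 * X 1 : MvPolynomial (Fin 3) ℂ) = r4Poly + (X 0 * X 2 + X 1) - X 2 := by
    rw [r4Poly]
    ring
  rw [e]
  exact sub_mem (add_mem h4 hu) hz
end

section
/- Let R be the ℂ-subalgebra of the polynomial ring ℂ[x,y,z] generated by {q, r₁, r₂, r₃, r₄}. Then for every natural number n, the polynomials xⁿ and yⁿ belong to the R-submodule R + R·x of ℂ[x,y,z]. -/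
/-!
Both `z` and `s := x + y` lie in `R`. Substituting `y = s - x` into `r₄ = (x - 1)(y - z)` gives a
monic quadratic equation for `x` over `R`, namely `x² = (s - z + 1) x + (z - s - r₄)`. Hence
`R + R·x` is stable under multiplication by `x`, and so also by `y = s - x`; both claims
follow by induction on `n`, starting from `1 ∈ R + R·x`.
-/

open MvPolynomial

/-- `R + R·x`: the `R`-submodule of `ℂ[x,y,z]` spanned by `1` and `x`, as a set. -/
def RRx : Set (MvPolynomial (Fin 3) ℂ) :=
  {p | ∃ r ∈ Rsub, ∃ r' ∈ Rsub, p = r + r' * X 0}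

theorem X2_mem_Rsub : (X 2 : MvPolynomial (Fin 3) ℂ) ∈ Rsub := by
  have hq : qPoly ∈ Rsub := Algebra.subset_adjoin (by simp)
  have h : (X 2 : MvPolynomial (Fin 3) ℂ) = C (4 / 3 : ℂ) * qPoly + C 9 := by
    rw [qPoly, ← mul_assoc, ← C_mul]
    norm_num
  rw [h]
  exact add_mem (mul_mem (Rsub.algebraMap_mem _) hq) (Rsub.algebraMap_mem _)

theorem X0_add_X1_mem_Rsub : (X 0 + X 1 : MvPolynomial (Fin 3) ℂ) ∈ Rsub := by
  have h1 : r1Poly ∈ Rsub := Algebra.subset_adjoin (by simp)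
  have h : (X 0 + X 1 : MvPolynomial (Fin 3) ℂ) = r1Poly - X 2 - 1 := by
    rw [r1Poly]
    ring
  rw [h]
  exact sub_mem (sub_mem h1 X2_mem_Rsub) (one_mem _)

theorem mul_X0_mem_RRx {p : MvPolynomial (Fin 3) ℂ} (hp : p ∈ RRx) : p * X 0 ∈ RRx := by
  obtain ⟨r, hr, r', hr', rfl⟩ := hp
  have h4 : r4Poly ∈ Rsub := Algebra.subset_adjoin (by simp)
  have hz := X2_mem_Rsub
  have hs := X0_add_X1_mem_Rsub
  -- The coefficients come from `x² = (s - z + 1) x + (z - s - r₄)`.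
  refine ⟨r' * (X 2 - (X 0 + X 1) - r4Poly), mul_mem hr' (sub_mem (sub_mem hz hs) h4),
    r + r' * ((X 0 + X 1) - X 2 + 1),
    add_mem hr (mul_mem hr' (add_mem (sub_mem hs hz) (one_mem _))), ?_⟩
  rw [r4Poly]
  ring

theorem mul_X1_mem_RRx {p : MvPolynomial (Fin 3) ℂ} (hp : p ∈ RRx) : p * X 1 ∈ RRx := by
  obtain ⟨a, ha, b, hb, hab⟩ := mul_X0_mem_RRx hp
  obtain ⟨r, hr, r', hr', rfl⟩ := hp
  have hs := X0_add_X1_mem_Rsub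
  refine ⟨r * (X 0 + X 1) - a, sub_mem (mul_mem hr hs) ha,
    r' * (X 0 + X 1) - b, sub_mem (mul_mem hr' hs) hb, ?_⟩
  linear_combination -hab

theorem one_mem_RRx : (1 : MvPolynomial (Fin 3) ℂ) ∈ RRx :=
  ⟨1, one_mem _, 0, zero_mem _, by ring⟩

/-- For every natural number `n`, the polynomials `xⁿ` and `yⁿ` belong to `R + R·x`. -/
theorem stmt_1 (n : ℕ) :
    (X 0 : MvPolynomial (Fin 3) ℂ) ^ n ∈ RRx ∧
    (X 1 : MvPolynomial (Fin 3) ℂ) ^ n ∈ RRx := by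
  induction n with
  | zero => simpa using one_mem_RRx
  | succ k ih =>
    rw [pow_succ, pow_succ]
    exact ⟨mul_X0_mem_RRx ih.1, mul_X1_mem_RRx ih.2⟩
end

section
/- Let R be the ℂ-subalgebra of the polynomial ring ℂ[x,y,z] generated by {q, r₁, r₂, r₃, r₄}. Then the polynomial x does NOT belong to R. (Consequently R is a proper subalgebra of ℂ[x,y,z].) -/
/-!
On the plane `z = 1` all five generators are symmetric under swapping `x` and `y`. Hence every
element of `R` takes the same value at the points `(0, 1, 1)` and `(1, 0, 1)`, whereas `x` does not.
-/

open MvPolynomial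

/-- Elements of `R` do not separate the points `(0, 1, 1)` and `(1, 0, 1)`. -/
lemma Rsub_le_equalizer :
    Rsub ≤ AlgHom.equalizer (aeval ![(0 : ℂ), 1, 1]) (aeval ![(1 : ℂ), 0, 1]) := by
  refine Algebra.adjoin_le ?_
  rintro p (rfl | rfl | rfl | rfl | rfl) <;>
    simp [qPoly, r1Poly, r2Poly, r3Poly, r4Poly] <;> norm_num

/-- The polynomial `x` does not belong to `R`; consequently `R` is a proper subalgebra
of `ℂ[x,y,z]`. -/
theorem stmt_2 :
    (X 0 : MvPolynomial (Fin 3) ℂ) ∉ Rsub ∧ Rsub ≠ ⊤ := by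
  have hx : (X 0 : MvPolynomial (Fin 3) ℂ) ∉ Rsub := by
    intro h
    have := Rsub_le_equalizer h
    simp [AlgHom.mem_equalizer] at this
  exact ⟨hx, fun h => hx (h ▸ Algebra.mem_top)⟩
end

section
/- Let c ∈ ℂ with c ≠ 1, and let ev_c : ℂ[x,y,z] → ℂ[x,y] be the ℂ-algebra homomorphism fixing x and y and sending z to the constant c. Then the image under ev_c of the ℂ-subalgebra of ℂ[x,y,z] generated by {r₁, r₂, r₃, r₄} is all of ℂ[x,y]. -/
open MvPolynomial

/-- The evaluation homomorphism `ev_c : ℂ[x,y,z] → ℂ[x,y]`, `x ↦ x`, `y ↦ y`, `z ↦ c`. -/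
noncomputable def evc (c : ℂ) : MvPolynomial (Fin 3) ℂ →ₐ[ℂ] MvPolynomial (Fin 2) ℂ :=
  aeval ![X 0, X 1, C c]

/-- For `c ≠ 1`, the image under `ev_c` of the ℂ-subalgebra generated by
`r₁, r₂, r₃, r₄` is all of `ℂ[x,y]`. -/
theorem stmt_4 (c : ℂ) (hc : c ≠ 1) :
    (Algebra.adjoin ℂ {r1Poly, r2Poly, r3Poly, r4Poly}).map (evc c) = ⊤ := by
  set A := (Algebra.adjoin ℂ {r1Poly, r2Poly, r3Poly, r4Poly}).map (evc c)
  have mem : ∀ p ∈ ({r1Poly, r2Poly, r3Poly, r4Poly} : Set (MvPolynomial (Fin 3) ℂ)),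
      evc c p ∈ A := fun p hp => ⟨p, Algebra.subset_adjoin hp, rfl⟩
  have h1 := mem r1Poly (by simp)
  have h2 := mem r2Poly (by simp)
  have h4 := mem r4Poly (by simp)
  have hC : ∀ a : ℂ, (C a : MvPolynomial (Fin 2) ℂ) ∈ A := fun a => A.algebraMap_mem a
  have hs : (X 0 + X 1 : MvPolynomial (Fin 2) ℂ) ∈ A := by
    have h := A.sub_mem h1 (hC (c + 1))
    convert h using 1
    simp only [evc, r1Poly, map_add, map_one, aeval_X, Matrix.cons_val]
    ring
  have hx4 : (C (4 * (c - 1)) * X 0 : MvPolynomial (Fin 2) ℂ) ∈ A := by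
    have h := A.sub_mem (A.sub_mem (A.sub_mem (A.add_mem h2 (A.mul_mem (hC 2) h4))
      (A.pow_mem hs 2)) (A.mul_mem (hC 4) hs)) (hC ((c + 1) ^ 2))
    convert h using 1
    simp only [evc, r2Poly, r4Poly, map_add, map_sub, map_mul, map_pow, map_one, map_ofNat,
      aeval_X, Matrix.cons_val]
    ring
  have hx : (X 0 : MvPolynomial (Fin 2) ℂ) ∈ A := by
    have h0 : 4 * (c - 1) ≠ 0 := mul_ne_zero (by norm_num) (sub_ne_zero.mpr hc)
    have h := A.mul_mem (hC (4 * (c - 1))⁻¹) hx4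
    rwa [← mul_assoc, ← C_mul, inv_mul_cancel₀ h0, C_1, one_mul] at h
  have hy : (X 1 : MvPolynomial (Fin 2) ℂ) ∈ A := by
    simpa using A.sub_mem hs hx
  rw [eq_top_iff, ← adjoin_range_X, Algebra.adjoin_le_iff]
  rintro _ ⟨i, rfl⟩
  fin_cases i
  · exact hx
  · exact hy
end

section
/- Let k, k' be positive integers, m = (m₁,…,m_k) a k-tuple of positive integers, and m' = (m'₁,…,m'_{k'}) a k'-tuple of positive integers. For N ∈ ℕ define v_m(N) := #{ (a₁,…,a_k) ∈ ℕ^k : Σᵢ aᵢ·mᵢ = N }, and similarly v_{m'}(N). If v_m(N) = v_{m'}(N) for every N ∈ ℕ, then k = k' and there is a permutation σ of {1,…,k} with m'_i = m_{σ(i)} for all i; that is, the counting sequence (v_m(N))_{N∈ℕ} determines k and the tuple m up to permutation. -/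
/-!
The multiplicity `#{i | m i = n}` is recovered from the counting function by strong induction
on `n`. A solution of `∑ aᵢ mᵢ = n` with `n > 0` either uses a part of size at least `n`, in which
case it is a single part equal to `n`, taken once, or it uses only parts smaller than `n`
(`card_sol_eq`). The number of solutions of the second kind depends only on the multiset of parts
below `n`, which the two tuples share by the induction hypothesis, so the number of parts equal
to `n` agrees as well. Equal multiplicities give a bijection of the index sets matching the parts
(`exists_equiv_of_card_fiber_eq`).
-/

/-- The solutions `a : ι → ℕ` of `∑ i, a i * f i = n`, for parts `f` indexed by a finite type. -/
abbrev Sol {ι : Type*} [Fintype ι] (f : ι → ℕ) (n : ℕ) : Type _ :=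
  {a : ι → ℕ // ∑ i, a i * f i = n}

lemma finite_sol {ι : Type*} [Fintype ι] (f : ι → ℕ) (hf : ∀ i, 0 < f i) (n : ℕ) :
    Finite (Sol f n) := by
  refine Set.Finite.subset (Set.Finite.pi' fun _ : ι => Set.finite_Iic n) ?_
  intro a ha i
  have h1 : a i * f i ≤ ∑ i, a i * f i :=
    Finset.single_le_sum (f := fun i => a i * f i) (fun _ _ => Nat.zero_le _) (Finset.mem_univ i)
  have ha' : ∑ i, a i * f i = n := ha
  have h2 : a i * 1 ≤ a i * f i := Nat.mul_le_mul_left _ (hf i)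
  change a i ≤ n
  omega

lemma exists_equiv_of_card_fiber_eq {α β : Type*} [Finite α] [Finite β] (f : α → ℕ) (g : β → ℕ)
    (h : ∀ c, Nat.card {a // f a = c} = Nat.card {b // g b = c}) :
    ∃ e : α ≃ β, ∀ a, g (e a) = f a :=
  ⟨Equiv.ofFiberEquiv fun c => (Finite.card_eq.1 (h c)).some, fun a => Equiv.ofFiberEquiv_map _ a⟩

lemma card_sol_congr {α β : Type*} [Fintype α] [Fintype β] (f : α → ℕ) (g : β → ℕ)
    (e : α ≃ β) (he : ∀ a, g (e a) = f a) (n : ℕ) :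
    Nat.card (Sol f n) = Nat.card (Sol g n) := by
  refine Nat.card_congr (Equiv.subtypeEquiv (e.arrowCongr (Equiv.refl ℕ)) fun a => ?_)
  rw [← Equiv.sum_comp e]
  simp [he]

/-- A solution for `n > 0` is either a single part equal to `n`, or uses only parts below `n`. -/
lemma card_sol_eq {ι : Type*} [Fintype ι] (f : ι → ℕ) (hf : ∀ i, 0 < f i) (n : ℕ) (hn : 0 < n) :
    Nat.card (Sol f n) =
      Nat.card {i // f i = n} + Nat.card (Sol (fun i : {i // f i < n} => f i) n) := by
  classical
  have := finite_sol (fun i : {i // f i < n} => f i) (fun i => hf i) n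
  have extend_sum : ∀ b : {i // f i < n} → ℕ,
      ∑ i, (if h : f i < n then b ⟨i, h⟩ else 0) * f i = ∑ i : {i // f i < n}, b i * f i := by
    intro b
    rw [← Fintype.sum_subtype_add_sum_subtype (fun i => f i < n)]
    have hlarge : ∀ i : {i // ¬ f i < n},
        (if h : f i < n then b ⟨i, h⟩ else 0) * f i = 0 := fun i => by simp [i.2]
    have hsmall : ∀ i : {i // f i < n},
        (if h : f i < n then b ⟨i, h⟩ else 0) * f i = b i * f i := fun i => by simp [i.2]
    simp only [hlarge, hsmall, Finset.sum_const_zero, add_zero]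
  let F : {i // f i = n} ⊕ Sol (fun i : {i // f i < n} => f i) n → Sol f n :=
    Sum.elim
      (fun i => ⟨Pi.single i.1 1, by simp [Pi.single_apply, i.2]⟩)
      (fun b => ⟨fun i => if h : f i < n then b.1 ⟨i, h⟩ else 0, by rw [extend_sum, b.2]⟩)
  have hF : Function.Bijective F := by
    constructor
    · rintro (⟨i, hi⟩ | ⟨b, hb⟩) (⟨j, hj⟩ | ⟨c, hc⟩) hij
      · have := congrFun (congrArg Subtype.val hij) i
        simp only [F, Sum.elim_inl, Pi.single_apply] at this
        have : i = j := by by_contra hne; simp [hne] at this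
        subst this; rfl
      · have := congrFun (congrArg Subtype.val hij) i
        simp [F, hi] at this
      · have := congrFun (congrArg Subtype.val hij) j
        simp [F, hj] at this
      · congr 2
        funext i
        have := congrFun (congrArg Subtype.val hij) i.1
        simpa [F, i.2] using this
    · rintro ⟨a, ha⟩
      by_cases hex : ∃ i, n ≤ f i ∧ a i ≠ 0
      · obtain ⟨i, hi, hai⟩ := hex
        have hsum := Finset.add_sum_erase Finset.univ (fun i => a i * f i) (Finset.mem_univ i)
        simp only [ha] at hsum
        have h1 : 1 * f i ≤ a i * f i := Nat.mul_le_mul_right _ (Nat.pos_of_ne_zero hai)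
        have hfi : f i = n := by omega
        have ha1 : a i = 1 := by
          have : a i * n ≤ 1 * n := by rw [hfi] at hsum; omega
          have := Nat.le_of_mul_le_mul_right this hn
          omega
        have h0 : ∑ x ∈ Finset.univ.erase i, a x * f x = 0 := by
          omega
        refine ⟨Sum.inl ⟨i, hfi⟩, Subtype.ext (funext fun j => ?_)⟩
        by_cases hj : j = i
        · subst hj; simp [F, ha1]
        · have := (Finset.sum_eq_zero_iff.1 h0) j (by simp [hj])
          have := (Nat.mul_eq_zero.1 this).resolve_right (hf j).ne'
          simp [F, hj, this]
      · push Not at hex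
        have hext : (fun i => if h : f i < n then a i else 0) = a := by
          funext i
          by_cases hi : f i < n
          · simp [hi]
          · simp [hi, hex i (not_lt.1 hi)]
        refine ⟨Sum.inr ⟨fun i => a i, ?_⟩, Subtype.ext hext⟩
        rw [← extend_sum]
        refine Eq.trans ?_ ha
        exact Finset.sum_congr rfl fun i _ => congrArg (· * f i) (congrFun hext i)
  rw [← Nat.card_congr (Equiv.ofBijective F hF), Nat.card_sum]

lemma card_fiber_eq {α β : Type*} [Fintype α] [Fintype β] (f : α → ℕ) (g : β → ℕ)
    (hf : ∀ i, 0 < f i) (hg : ∀ i, 0 < g i)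
    (h : ∀ n, Nat.card (Sol f n) = Nat.card (Sol g n)) (n : ℕ) :
    Nat.card {i // f i = n} = Nat.card {i // g i = n} := by
  induction n using Nat.strong_induction_on with
  | _ n ih =>
    rcases Nat.eq_zero_or_pos n with rfl | hn
    · have : IsEmpty {i // f i = 0} := ⟨fun i => (hf i).ne' i.2⟩
      have : IsEmpty {i // g i = 0} := ⟨fun i => (hg i).ne' i.2⟩
      simp
    · obtain ⟨e, he⟩ := exists_equiv_of_card_fiber_eq
        (fun i : {i // f i < n} => f i) (fun i : {i // g i < n} => g i) (by
          intro c
          by_cases hc : c < n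
          · rw [Nat.card_congr (Equiv.subtypeSubtypeEquivSubtype (p := fun i => f i < n)
                (q := fun i => f i = c) (fun {x} hx => hx.trans_lt hc)),
              Nat.card_congr (Equiv.subtypeSubtypeEquivSubtype (p := fun i => g i < n)
                (q := fun i => g i = c) (fun {x} hx => hx.trans_lt hc))]
            exact ih c hc
          · have : IsEmpty {i : {i // f i < n} // f i = c} := ⟨fun i => hc (i.2 ▸ i.1.2)⟩
            have : IsEmpty {i : {i // g i < n} // g i = c} := ⟨fun i => hc (i.2 ▸ i.1.2)⟩
            simp)
      have h1 := card_sol_congr (fun i : {i // f i < n} => f i)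
        (fun i : {i // g i < n} => g i) e he n
      have h2 := h n
      rw [card_sol_eq f hf n hn, card_sol_eq g hg n hn, h1] at h2
      exact Nat.add_right_cancel h2

/-- For tuples `m = (m₁,…,m_k)` and `m' = (m'₁,…,m'_{k'})` of positive integers, if for
every `N` the number `v_m(N)` of tuples `(a₁,…,a_k) ∈ ℕ^k` with `Σᵢ aᵢ·mᵢ = N` equals
`v_{m'}(N)`, then `k = k'` and there is a permutation matching `m'` with `m`; i.e. the
counting sequence `(v_m(N))_N` determines `k` and `m` up to permutation. -/
theorem stmt_5 (k k' : ℕ) (hk : 0 < k) (hk' : 0 < k')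
    (m : Fin k → ℕ) (m' : Fin k' → ℕ)
    (hm : ∀ i, 0 < m i) (hm' : ∀ i, 0 < m' i)
    (h : ∀ N : ℕ,
      Nat.card {a : Fin k → ℕ // ∑ i, a i * m i = N} =
        Nat.card {a : Fin k' → ℕ // ∑ i, a i * m' i = N}) :
    k = k' ∧ ∃ σ : Fin k' ≃ Fin k, ∀ i, m' i = m (σ i) := by
  obtain ⟨e, he⟩ := exists_equiv_of_card_fiber_eq m' m fun n =>
    (card_fiber_eq m m' hm hm' h n).symm
  exact ⟨(by simpa using Fintype.card_congr e.symm), e, fun i => (he i).symm⟩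
end

section
/- Consider the linear action of the special unitary group SU(3) on V = ℂ³ ⊕ ℂ³ given by u·(v, w) = (u v, ū w), where ū denotes the entrywise complex conjugate matrix, and the induced action on the algebra ℂ[V] of polynomial functions on V by (u·f)(p) = f(u⁻¹·p). Then the subalgebra of SU(3)-invariant polynomial functions equals the ℂ-subalgebra generated by the single function P(v,w) = Σᵢ₌₁³ vᵢ wᵢ, and P is transcendental over ℂ. In particular, the invariant algebra is a polynomial ring generated by a single homogeneous element of degree 2. -/
/-!
The points `(v, v̄)` form a real form of `V = ℂ³ ⊕ ℂ³` which is Zariski dense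
(`eq_zero_of_realPt`) and is preserved by `SU(3)`, which acts on it as on `ℂ³`. Two Givens rotations
in `SU(3)` bring any `v` to `(t, 0, 0)` with `t` real and `t² = Σ |vᵢ|² = P(v, v̄)`
(`exists_axis`). So an invariant `f` satisfies `f(v, v̄) = g(t)` for the one-variable polynomial
`g(t) = f(t e₁, t e₁)`. Invariance under `diag(-1, -1, 1)` makes `g` even, `g(t) = h(t²)`
(`exists_eval_sq`), hence `f = h(P)` on the real form and therefore everywhere.
-/

open MvPolynomial

/-- Coordinates on `V = ℂ³ ⊕ ℂ³`. -/
abbrev Idx10 := Fin 3 ⊕ Fin 3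

/-- The linear action of `SU(3)` on `V = ℂ³ ⊕ ℂ³`: `u·(v,w) = (u v, ū w)`, written on
coordinates of points. -/
noncomputable def act10 (u : Matrix (Fin 3) (Fin 3) ℂ) (p : Idx10 → ℂ) : Idx10 → ℂ :=
  Sum.elim
    (fun i => ∑ j, u i j * p (Sum.inl j))
    (fun i => ∑ j, (starRingEnd ℂ) (u i j) * p (Sum.inr j))

/-- The function `P(v,w) = Σᵢ vᵢ wᵢ`, as a polynomial. -/
noncomputable def PPoly10 : MvPolynomial Idx10 ℂ :=
  ∑ i : Fin 3, X (Sum.inl i) * X (Sum.inr i)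

open scoped ComplexConjugate

/-- The point `(v, v̄)` of the real form of `ℂ³ ⊕ ℂ³`. -/
noncomputable def realPt (v : Fin 3 → ℂ) : Idx10 → ℂ :=
  Sum.elim v (fun i => conj (v i))

/-- `realPt` intertwines the action of a matrix on `ℂ³` with `act10`. -/
lemma act10_realPt (u : Matrix (Fin 3) (Fin 3) ℂ) (v : Fin 3 → ℂ) :
    act10 u (realPt v) = realPt (u.mulVec v) := by
  funext i
  rcases i with i | i <;> simp [act10, realPt, Matrix.mulVec, dotProduct]

/-- The real form is Zariski dense: after the linear change of coordinates `v = x + iy`,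
`w = x - iy` its points are those with `x` and `y` real. -/
lemma eq_zero_of_realPt (f : MvPolynomial Idx10 ℂ) (hf : ∀ v, eval (realPt v) f = 0) :
    f = 0 := by
  let s : Idx10 → MvPolynomial Idx10 ℂ :=
    Sum.elim (fun i => X (Sum.inl i) + C Complex.I * X (Sum.inr i))
      (fun i => X (Sum.inl i) - C Complex.I * X (Sum.inr i))
  have hs : ∀ p, eval p (bind₁ s f) = eval (fun i => eval p (s i)) f := by
    intro p
    exact eval₂Hom_bind₁ _ _ _ _
  have h0 : bind₁ s f = 0 := by
    refine MvPolynomial.funext_set (fun _ => Set.range ((↑) : ℝ → ℂ))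
      (fun _ => Set.infinite_range_of_injective Complex.ofReal_injective) ?_
    intro p hp
    choose r hr using fun i => hp i (Set.mem_univ i)
    rw [hs, map_zero, ← hf (fun i => p (Sum.inl i) + Complex.I * p (Sum.inr i))]
    congr 2
    funext i
    rcases i with i | i <;> simp [s, realPt, ← hr, sub_eq_add_neg]
  refine MvPolynomial.funext fun p => ?_
  have h1 := hs (Sum.elim (fun i => (p (Sum.inl i) + p (Sum.inr i)) / 2)
    (fun i => (p (Sum.inl i) - p (Sum.inr i)) / (2 * Complex.I)))
  rw [h0, map_zero] at h1
  rw [map_zero, h1]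
  congr 2
  funext i
  have := Complex.I_ne_zero
  rcases i with i | i <;> simp [s] <;> field_simp <;> ring

/-- The complex Givens rotation sending `(a, b)` to `(t, 0)`. -/
lemma exists_givens (a b : ℂ) : ∃ (α β : ℂ) (t : ℝ),
    α * conj α + β * conj β = 1 ∧ α * a + β * b = t ∧ -conj β * a + conj α * b = 0 ∧
      (t : ℂ) ^ 2 = a * conj a + b * conj b := by
  set t : ℝ := Real.sqrt (Complex.normSq a + Complex.normSq b) with ht
  have ht2 : (t : ℂ) ^ 2 = a * conj a + b * conj b := by
    rw [Complex.mul_conj, Complex.mul_conj, ← Complex.ofReal_pow, ht, Real.sq_sqrt]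
    · push_cast; rfl
    · exact add_nonneg (Complex.normSq_nonneg _) (Complex.normSq_nonneg _)
  by_cases h : t = 0
  · have h0 : Complex.normSq a + Complex.normSq b = 0 :=
      (Real.sqrt_eq_zero
        (add_nonneg (Complex.normSq_nonneg _) (Complex.normSq_nonneg _))).1 (ht ▸ h)
    have ha := Complex.normSq_nonneg a
    have hb := Complex.normSq_nonneg b
    have ha0 : a = 0 := Complex.normSq_eq_zero.1 (by linarith)
    have hb0 : b = 0 := Complex.normSq_eq_zero.1 (by linarith)
    exact ⟨1, 0, t, by simp, by simp [ha0, h], by simp [hb0], ht2⟩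
  · have hc : (t : ℂ) ≠ 0 := by exact_mod_cast h
    refine ⟨conj a / t, conj b / t, t, ?_, ?_, ?_, ht2⟩
    · simp only [map_div₀, Complex.conj_conj, Complex.conj_ofReal]
      field_simp
      linear_combination -ht2
    · field_simp
      linear_combination -ht2
    · simp only [map_div₀, Complex.conj_conj, Complex.conj_ofReal]
      field_simp
      ring

lemma givens12_mem {α β : ℂ} (h : α * conj α + β * conj β = 1) :
    !![α, β, 0; -conj β, conj α, 0; 0, 0, 1] ∈ Matrix.specialUnitaryGroup (Fin 3) ℂ := by
  rw [Matrix.mem_specialUnitaryGroup_iff, Matrix.mem_unitaryGroup_iff]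
  constructor
  · ext i j
    fin_cases i <;> fin_cases j <;>
      simp [Matrix.mul_apply, Fin.sum_univ_three, Matrix.star_apply] <;>
      first | linear_combination h | ring
  · simp [Matrix.det_fin_three]
    linear_combination h

lemma givens13_mem {α β : ℂ} (h : α * conj α + β * conj β = 1) :
    !![α, 0, β; 0, 1, 0; -conj β, 0, conj α] ∈ Matrix.specialUnitaryGroup (Fin 3) ℂ := by
  rw [Matrix.mem_specialUnitaryGroup_iff, Matrix.mem_unitaryGroup_iff]
  constructor
  · ext i j
    fin_cases i <;> fin_cases j <;>
      simp [Matrix.mul_apply, Fin.sum_univ_three, Matrix.star_apply] <;>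
      first | linear_combination h | ring
  · simp [Matrix.det_fin_three]
    linear_combination h

/-- Every vector of `ℂ³` is moved by `SU(3)` to a real multiple of the first basis vector, of
the same length. -/
lemma exists_axis (v : Fin 3 → ℂ) : ∃ u ∈ Matrix.specialUnitaryGroup (Fin 3) ℂ, ∃ t : ℝ,
    u.mulVec v = ![(t : ℂ), 0, 0] ∧ (t : ℂ) ^ 2 = eval (realPt v) PPoly10 := by
  obtain ⟨α, β, s, h1, h2, h3, h4⟩ := exists_givens (v 0) (v 1)
  obtain ⟨γ, δ, t, k1, k2, k3, k4⟩ := exists_givens s (v 2)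
  refine ⟨_, mul_mem (givens13_mem k1) (givens12_mem h1), t, ?_, ?_⟩
  · have e : (!![α, β, 0; -conj β, conj α, 0; 0, 0, 1]).mulVec v = ![(s : ℂ), 0, v 2] := by
      funext i
      fin_cases i <;> simp [Matrix.mulVec, dotProduct, Fin.sum_univ_three]
      · exact h2
      · linear_combination h3
    rw [← Matrix.mulVec_mulVec, e]
    funext i
    fin_cases i <;> simp [Matrix.mulVec, dotProduct, Fin.sum_univ_three]
    · exact k2
    · linear_combination k3
  · rw [k4, Complex.conj_ofReal]
    simp only [PPoly10, realPt, Fin.sum_univ_three, map_add, map_mul, eval_X, Sum.elim_inl,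
      Sum.elim_inr]
    linear_combination h4

/-- The restriction of an invariant polynomial to the line through `(e₁, e₁)` is even, hence a
polynomial in the square of the parameter. -/
lemma exists_eval_sq (f : MvPolynomial Idx10 ℂ)
    (hf : ∀ u ∈ Matrix.specialUnitaryGroup (Fin 3) ℂ, ∀ p : Idx10 → ℂ,
      eval (act10 u p) f = eval p f) :
    ∃ h : Polynomial ℂ, ∀ t : ℂ,
      eval (Sum.elim ![t, 0, 0] ![t, 0, 0] : Idx10 → ℂ) f = h.eval (t ^ 2) := by
  let g : Polynomial ℂ :=
    aeval (Sum.elim ![Polynomial.X, 0, 0] ![Polynomial.X, 0, 0] : Idx10 → Polynomial ℂ) f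
  have hg : ∀ t : ℂ, g.eval t = eval (Sum.elim ![t, 0, 0] ![t, 0, 0] : Idx10 → ℂ) f := by
    intro t
    rw [← Polynomial.coe_aeval_eq_eval, ← MvPolynomial.coe_aeval_eq_eval]
    change ((Polynomial.aeval t).comp (aeval _)) f = aeval _ f
    congr 1
    ext i
    rcases i with i | i <;> fin_cases i <;> simp
  have hu : !![(-1 : ℂ), 0, 0; 0, -1, 0; 0, 0, 1] ∈ Matrix.specialUnitaryGroup (Fin 3) ℂ := by
    simpa using givens12_mem (α := -1) (β := 0) (by simp)
  have hev : g.comp (Polynomial.C (-1) * Polynomial.X) = g := by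
    refine Polynomial.funext fun t => ?_
    rw [Polynomial.eval_comp, Polynomial.eval_C_mul, Polynomial.eval_X, hg, hg, ← hf _ hu]
    congr 2
    funext i
    rcases i with i | i <;> fin_cases i <;> simp [act10, Fin.sum_univ_three]
  have hexp : Polynomial.expand ℂ 2 (Polynomial.contract 2 g) = g := by
    ext n
    rw [Polynomial.coeff_expand two_pos]
    split_ifs with hn
    · rw [Polynomial.coeff_contract two_ne_zero, Nat.div_mul_cancel hn]
    · have h1 := congrArg (fun q => Polynomial.coeff q n) hev
      simp only [Polynomial.comp_C_mul_X_coeff] at h1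
      rw [(Nat.not_even_iff_odd.1 (fun h => hn h.two_dvd)).neg_one_pow] at h1
      linear_combination (1 / 2 : ℂ) * h1
  refine ⟨Polynomial.contract 2 g, fun t => ?_⟩
  rw [← hg, ← Polynomial.expand_eval, hexp]

lemma eval_aeval_PPoly10 (p : Idx10 → ℂ) (q : Polynomial ℂ) :
    eval p (Polynomial.aeval PPoly10 q) = q.eval (eval p PPoly10) := by
  rw [← MvPolynomial.coe_aeval_eq_eval]
  change aeval p (Polynomial.aeval PPoly10 q) = _
  rw [← Polynomial.aeval_algHom_apply, Polynomial.coe_aeval_eq_eval]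
  rfl

lemma eval_act10_PPoly10 {u : Matrix (Fin 3) (Fin 3) ℂ}
    (hu : u ∈ Matrix.specialUnitaryGroup (Fin 3) ℂ) (p : Idx10 → ℂ) :
    eval (act10 u p) PPoly10 = eval p PPoly10 := by
  have h := Matrix.mem_unitaryGroup_iff'.1 (Matrix.mem_specialUnitaryGroup_iff.1 hu).1
  have e : ∀ j k, ∑ i, conj (u i j) * u i k = (1 : Matrix (Fin 3) (Fin 3) ℂ) j k := by
    intro j k
    rw [← h]
    simp [Matrix.mul_apply, Matrix.star_apply]
  calc eval (act10 u p) PPoly10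
      = ∑ i, (∑ k, u i k * p (Sum.inl k)) * ∑ j, conj (u i j) * p (Sum.inr j) := by
        simp [PPoly10, act10]
    _ = ∑ j, ∑ k, (∑ i, conj (u i j) * u i k) * (p (Sum.inl k) * p (Sum.inr j)) := by
        simp only [Fin.sum_univ_three]
        ring
    _ = eval p PPoly10 := by
        simp [e, PPoly10, Matrix.one_apply]

/-- The algebra of `SU(3)`-invariant polynomial functions on `ℂ³ ⊕ ℂ³` (for the action
`u·(v,w) = (uv, ūw)`) is the ℂ-subalgebra generated by `P`, and `P` is transcendental
over ℂ. -/
theorem stmt_10 :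
    {f : MvPolynomial Idx10 ℂ |
        ∀ u ∈ Matrix.specialUnitaryGroup (Fin 3) ℂ, ∀ p : Idx10 → ℂ,
          eval (act10 u p) f = eval p f} =
      (Algebra.adjoin ℂ {PPoly10} : Subalgebra ℂ (MvPolynomial Idx10 ℂ)) ∧
    Transcendental ℂ PPoly10 := by
  constructor
  · ext f
    rw [SetLike.mem_coe, Algebra.adjoin_singleton_eq_range_aeval, AlgHom.mem_range]
    constructor
    · intro hf
      obtain ⟨h, hh⟩ := exists_eval_sq f hf
      refine ⟨h, (sub_eq_zero.1 (eq_zero_of_realPt _ fun v => ?_)).symm⟩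
      obtain ⟨u, hu, t, hut, ht⟩ := exists_axis v
      have hpt : realPt ![(t : ℂ), 0, 0] = Sum.elim ![(t : ℂ), 0, 0] ![(t : ℂ), 0, 0] := by
        funext i
        rcases i with i | i <;> fin_cases i <;> simp [realPt]
      rw [map_sub, eval_aeval_PPoly10, ← hf u hu, act10_realPt, hut, hpt, hh, ht, sub_self]
    · rintro ⟨q, rfl⟩ u hu p
      rw [eval_aeval_PPoly10, eval_aeval_PPoly10, eval_act10_PPoly10 hu]
  · rw [transcendental_iff]
    intro q hq
    refine Polynomial.funext fun t => ?_
    -- `P` takes the value `t` at `(t e₁, e₁)`.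
    have h := eval_aeval_PPoly10 (Sum.elim ![t, 0, 0] ![1, 0, 0]) q
    rw [hq] at h
    simpa [PPoly10, Fin.sum_univ_three] using h.symm
end

section
/- Let n ≥ 1 and let Sp(n) = { g ∈ U(2n) : gᵀ J g = J } be the compact symplectic group, where J is the standard 2n×2n symplectic matrix. Consider the diagonal action of Sp(n) on V = ℂ²ⁿ ⊕ ℂ²ⁿ, g·(v, w) = (g v, g w), and the induced action on the algebra ℂ[V] of polynomial functions on V by (g·f)(p) = f(g⁻¹·p). Then for every N ∈ ℕ, the ℂ-vector space of Sp(n)-invariant polynomial functions that are homogeneous of total degree N has dimension 1 if N is even and dimension 0 if N is odd. -/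
/-!
The invariants are the polynomials in `ω(v, w) = vᵀ J w`; in degree `N` they are spanned by
`ω ^ (N / 2)` for even `N` and vanish for odd `N`.

For odd `N` the element `-1` of the group acts by `-1` on forms of degree `N`, so an invariant is
zero (`eq_zero_of_odd`).

For even `N = 2m`, invariance under the compact group is first upgraded to the complex one.
Differentiating `f (exp (tA) p) = f p` kills `f` along every `A` in the Lie algebra of the compact
group (`lieD_eq_zero_of_skew`). The derivative is complex linear in `A`, and the complexification
of this Lie algebra is all of `sp(2n, ℂ)`, so `f` is killed by every complex symplectic direction
(`lieD_eq_zero`). Applied to the square-zero matrices `u uᵀ J`, whose flows are affine lines, this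
makes `f` invariant under every symplectic transvection `x ↦ x + z ω(u, x) u`
(`eval_transvection`).

Transvections act transitively on the pairs with `ω(v, w) = 1`, so `f` is constant on them
(`eval_hyperbolic`). By homogeneity `f = c ω ^ m` wherever `ω ≠ 0`, and hence everywhere, as
`ω` is not a zero divisor in the polynomial ring (`eq_C_mul_omPoly_pow`).
-/

open MvPolynomial Matrix

/-- Index for `ℂ²ⁿ`, split so that the standard symplectic matrix has block form. -/
abbrev K11 (n : ℕ) := Fin n ⊕ Fin n

/-- Coordinates on `V = ℂ²ⁿ ⊕ ℂ²ⁿ`. -/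
abbrev Idx11 (n : ℕ) := K11 n ⊕ K11 n

/-- The standard `2n × 2n` symplectic matrix `J = [[0, 1ₙ], [−1ₙ, 0]]`. -/
noncomputable def J11 (n : ℕ) : Matrix (K11 n) (K11 n) ℂ := fromBlocks 0 1 (-1) 0

/-- `g` belongs to the compact symplectic group `Sp(n) = {g ∈ U(2n) : gᵀ J g = J}`. -/
def IsSp (n : ℕ) (g : Matrix (K11 n) (K11 n) ℂ) : Prop :=
  g ∈ Matrix.unitaryGroup (K11 n) ℂ ∧ gᵀ * J11 n * g = J11 n

/-- The diagonal action of `Sp(n)` on `V = ℂ²ⁿ ⊕ ℂ²ⁿ`: `g·(v,w) = (g v, g w)`. -/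
noncomputable def act11 (n : ℕ) (g : Matrix (K11 n) (K11 n) ℂ) (p : Idx11 n → ℂ) :
    Idx11 n → ℂ :=
  Sum.elim
    (fun i => ∑ j, g i j * p (Sum.inl j))
    (fun i => ∑ j, g i j * p (Sum.inr j))

/-- The ℂ-vector space of `Sp(n)`-invariant polynomial functions on `ℂ²ⁿ ⊕ ℂ²ⁿ` that
are homogeneous of total degree `N`. -/
noncomputable def invHomog11 (n N : ℕ) : Submodule ℂ (MvPolynomial (Idx11 n) ℂ) where
  carrier := {f | (∀ g, IsSp n g → ∀ p, eval (act11 n g p) f = eval p f) ∧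
    f.IsHomogeneous N}
  add_mem' := fun hf hg =>
    ⟨fun g hgSp p => by simp [map_add, hf.1 g hgSp p, hg.1 g hgSp p], hf.2.add hg.2⟩
  zero_mem' := ⟨fun g hgSp p => by simp, (homogeneousSubmodule _ ℂ N).zero_mem⟩
  smul_mem' := fun c f hf =>
    ⟨fun g hgSp p => by simp [smul_eq_C_mul, hf.1 g hgSp p],
     (mem_homogeneousSubmodule _ _).mp
       ((homogeneousSubmodule _ ℂ N).smul_mem c
         ((mem_homogeneousSubmodule _ _).mpr hf.2))⟩

/-! ### Polynomial functions: scaling and the chain rule -/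

theorem eval_smul_of_isHomogeneous {σ : Type*} [Fintype σ] {f : MvPolynomial σ ℂ} {N : ℕ}
    (hf : f.IsHomogeneous N) (c : ℂ) (p : σ → ℂ) :
    eval (c • p) f = c ^ N * eval p f := by
  rw [eval_eq', eval_eq', Finset.mul_sum]
  refine Finset.sum_congr rfl fun d hd => ?_
  have h := hf.degree_eq_sum_deg_support hd
  simp only [Pi.smul_apply, smul_eq_mul, mul_pow, Finset.prod_mul_distrib]
  rw [Finset.prod_pow_eq_pow_sum, h,
    Finset.sum_subset (Finset.subset_univ d.support) (by simp)]
  ring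

theorem hasDerivAt_eval {σ : Type*} [Fintype σ] (f : MvPolynomial σ ℂ)
    {γ : ℂ → σ → ℂ} {γ' : σ → ℂ} {t : ℂ}
    (hγ : ∀ i, HasDerivAt (fun s => γ s i) (γ' i) t) :
    HasDerivAt (fun s => eval (γ s) f) (∑ i, eval (γ t) (pderiv i f) * γ' i) t := by
  classical
  induction f using MvPolynomial.induction_on with
  | C a => simpa using hasDerivAt_const t a
  | add f g hf hg =>
    simp only [map_add, add_mul, Finset.sum_add_distrib]
    exact hf.add hg
  | mul_X f j hf =>
    have h := hf.mul (hγ j)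
    simp only [map_mul, eval_X]
    refine h.congr_deriv ?_
    simp only [Derivation.leibniz, pderiv_X, smul_eq_mul, map_add, map_mul, eval_X, add_mul,
      Finset.sum_add_distrib, Finset.sum_mul, Pi.single_apply]
    rw [add_comm]
    congr 1
    · rw [Finset.sum_eq_single j]
      · simp
      · intro b _ hb; simp [hb.symm]
      · simp
    · exact Finset.sum_congr rfl fun i _ => by ring

/-! ### From the compact group to symplectic transvections -/

theorem J11_mul_self (n : ℕ) : J11 n * J11 n = -1 := by
  simp [J11, fromBlocks_multiply, ← fromBlocks_one, fromBlocks_neg]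

theorem J11_transpose (n : ℕ) : (J11 n)ᵀ = -J11 n := by
  simp [J11, fromBlocks_transpose, fromBlocks_neg]

theorem J11_conjTranspose (n : ℕ) : (J11 n)ᴴ = -J11 n := by
  simp [J11, fromBlocks_conjTranspose, fromBlocks_neg]

theorem act11_eq (n : ℕ) (g : Matrix (K11 n) (K11 n) ℂ) (p : Idx11 n → ℂ) :
    act11 n g p = Sum.elim (g *ᵥ (p ∘ Sum.inl)) (g *ᵥ (p ∘ Sum.inr)) := rfl

open scoped Matrix.Norms.Operator in
theorem isSp_exp {n : ℕ} {A : Matrix (K11 n) (K11 n) ℂ} (hA : Aᴴ = -A)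
    (hJ : Aᵀ * J11 n = -(J11 n * A)) : IsSp n (NormedSpace.exp A) := by
  constructor
  · rw [Matrix.mem_unitaryGroup_iff', star_eq_conjTranspose, ← Matrix.exp_conjTranspose, hA,
      Matrix.exp_neg, Matrix.nonsing_inv_mul _
        ((Matrix.isUnit_iff_isUnit_det _).mp (Matrix.isUnit_exp A))]
  · have hinv : (J11 n)⁻¹ = -J11 n :=
      Matrix.inv_eq_right_inv (by rw [mul_neg, J11_mul_self, neg_neg])
    have hu : IsUnit (J11 n) :=
      IsUnit.of_mul_eq_one (-J11 n) (by rw [mul_neg, J11_mul_self, neg_neg])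
    have hAt : Aᵀ = J11 n * (-A) * (J11 n)⁻¹ := by
      rw [hinv, mul_neg (J11 n) A, ← hJ, mul_neg, mul_assoc, J11_mul_self]; simp
    rw [← Matrix.exp_transpose, hAt, Matrix.exp_conj _ _ hu, mul_assoc _ _ (J11 n),
      Matrix.nonsing_inv_mul _ ((Matrix.isUnit_iff_isUnit_det _).mp hu), mul_one, mul_assoc,
      Matrix.exp_neg, Matrix.nonsing_inv_mul _
        ((Matrix.isUnit_iff_isUnit_det _).mp (Matrix.isUnit_exp A)), mul_one]

/-- Invariance of the polynomial function `f` under the compact symplectic group. -/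
def IsInv11 (n : ℕ) (f : MvPolynomial (Idx11 n) ℂ) : Prop :=
  ∀ g, IsSp n g → ∀ p, eval (act11 n g p) f = eval p f

/-- The derivative of `f` at `p` in the direction `X·p`. -/
noncomputable def lieD (n : ℕ) (f : MvPolynomial (Idx11 n) ℂ) (X : Matrix (K11 n) (K11 n) ℂ)
    (p : Idx11 n → ℂ) : ℂ :=
  ∑ i, eval p (pderiv i f) * act11 n X p i

theorem lieD_add {n : ℕ} (f : MvPolynomial (Idx11 n) ℂ) (X Y : Matrix (K11 n) (K11 n) ℂ)
    (p : Idx11 n → ℂ) : lieD n f (X + Y) p = lieD n f X p + lieD n f Y p := by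
  simp only [lieD, ← Finset.sum_add_distrib, ← mul_add]
  refine Finset.sum_congr rfl fun i _ => ?_
  rcases i with i | i <;> simp [act11, add_mul, Finset.sum_add_distrib]

theorem lieD_smul {n : ℕ} (f : MvPolynomial (Idx11 n) ℂ) (c : ℂ) (X : Matrix (K11 n) (K11 n) ℂ)
    (p : Idx11 n → ℂ) : lieD n f (c • X) p = c * lieD n f X p := by
  simp only [lieD, Finset.mul_sum]
  refine Finset.sum_congr rfl fun i _ => ?_
  rw [mul_left_comm]
  congr 1
  rcases i with i | i <;> simp only [act11, Sum.elim_inl, Sum.elim_inr, Finset.mul_sum,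
    Matrix.smul_apply, smul_eq_mul, mul_assoc]

open scoped Matrix.Norms.Operator in
theorem hasDerivAt_exp_entry {m : Type*} [Fintype m] [DecidableEq m] (A : Matrix m m ℂ)
    (i j : m) : HasDerivAt (fun t : ℂ => NormedSpace.exp (t • A) i j) (A i j) 0 := by
  have hE := hasDerivAt_exp_smul_const (𝕂 := ℂ) A 0
  rw [zero_smul, NormedSpace.exp_zero, one_mul] at hE
  exact (hasDerivAt_pi.mp (hasDerivAt_pi.mp hE i) j)

/-- Here `E` is a curve through `1`, complex differentiable at `0` with velocity `A`, of which only
the points with real parameter are known to lie in the compact group; the derivative at `0` is computed along the real axis. -/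
theorem lieD_eq_zero_of_curve {n : ℕ} {f : MvPolynomial (Idx11 n) ℂ} (hf : IsInv11 n f)
    {A : Matrix (K11 n) (K11 n) ℂ} {E : ℂ → Matrix (K11 n) (K11 n) ℂ}
    (hsp : ∀ t : ℝ, IsSp n (E t)) (h0 : E 0 = 1)
    (hent : ∀ i j, HasDerivAt (fun t => E t i j) (A i j) 0)
    (p : Idx11 n → ℂ) : lieD n f A p = 0 := by
  have hγ : ∀ i, HasDerivAt (fun t : ℂ => act11 n (E t) p i) (act11 n A p i) 0 := by
    rintro (i | i)
    · simp only [act11, Sum.elim_inl]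
      exact HasDerivAt.fun_sum fun j _ => (hent i j).mul_const _
    · simp only [act11, Sum.elim_inr]
      exact HasDerivAt.fun_sum fun j _ => (hent i j).mul_const _
  have h1 := hasDerivAt_eval f (γ := fun t => act11 n (E t) p) hγ
  have h2 := HasDerivAt.comp_ofReal (z := 0) (by rw [Complex.ofReal_zero]; exact h1)
  simp only [hf _ (hsp _) p] at h2
  have h3 := h2.unique (hasDerivAt_const (0 : ℝ) (eval p f))
  have h4 : act11 n (E 0) p = p := by
    rw [h0, act11_eq]
    simp
  simp only [h4] at h3
  exact h3

/-- An invariant is annihilated by the Lie algebra of the compact group: skew-Hermitian matrices in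
`sp(2n, ℂ)`. -/
theorem lieD_eq_zero_of_skew {n : ℕ} {f : MvPolynomial (Idx11 n) ℂ} (hf : IsInv11 n f)
    {A : Matrix (K11 n) (K11 n) ℂ} (hA : Aᴴ = -A) (hJ : Aᵀ * J11 n = -(J11 n * A))
    (p : Idx11 n → ℂ) : lieD n f A p = 0 := by
  refine lieD_eq_zero_of_curve hf (E := fun t : ℂ => NormedSpace.exp (t • A)) (fun t => ?_) ?_
    (hasDerivAt_exp_entry A) p
  · exact isSp_exp (by rw [conjTranspose_smul, hA]; simp)
      (by rw [transpose_smul, smul_mul_assoc, hJ, mul_smul_comm, smul_neg])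
  · simp only [zero_smul, NormedSpace.exp_zero]

/-- An invariant is annihilated by all of `sp(2n, ℂ)`: split `X` into its skew-Hermitian part and
`-i` times a skew-Hermitian matrix. Both lie in `sp(2n, ℂ)`, which is closed under `X ↦ Xᴴ`. -/
theorem lieD_eq_zero {n : ℕ} {f : MvPolynomial (Idx11 n) ℂ} (hf : IsInv11 n f)
    {X : Matrix (K11 n) (K11 n) ℂ} (hJ : Xᵀ * J11 n = -(J11 n * X))
    (p : Idx11 n → ℂ) : lieD n f X p = 0 := by
  have hJ' : Xᴴᵀ * J11 n = -(J11 n * Xᴴ) := by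
    have h1 : J11 n * Xᵀ = - (X * J11 n) := by
      have := congrArg (fun M => J11 n * M * J11 n) hJ
      simp only [mul_neg, neg_mul, ← mul_assoc, J11_mul_self] at this
      rw [mul_assoc (J11 n * Xᵀ), J11_mul_self] at this
      simpa [neg_eq_iff_eq_neg] using this
    have := congrArg conjTranspose h1
    rw [conjTranspose_neg, conjTranspose_mul, conjTranspose_mul, J11_conjTranspose, mul_neg,
      neg_mul, neg_neg] at this
    rw [show Xᴴᵀ = Xᵀᴴ from rfl, ← neg_eq_iff_eq_neg]
    exact this
  have e : X = (1 / 2 : ℂ) • (X + -Xᴴ) +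
      (-Complex.I / 2) • (Complex.I • (X + Xᴴ)) := by
    rw [smul_smul, show -Complex.I / 2 * Complex.I = 1 / 2 by
      rw [div_mul_eq_mul_div, neg_mul, Complex.I_mul_I, neg_neg]]
    module
  rw [e, lieD_add, lieD_smul, lieD_smul, lieD_eq_zero_of_skew hf, lieD_eq_zero_of_skew hf]
  · simp
  · rw [conjTranspose_smul, conjTranspose_add, conjTranspose_conjTranspose, add_comm]
    simp [add_comm]
  · rw [transpose_smul, transpose_add, smul_mul_assoc, add_mul, hJ, hJ', mul_smul_comm, mul_add,
      ← neg_add, smul_neg]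
  · rw [conjTranspose_add, conjTranspose_neg, conjTranspose_conjTranspose]
    abel
  · rw [transpose_add, transpose_neg, add_mul, neg_mul, hJ, hJ', mul_add, mul_neg, neg_add]

/-- The standard symplectic form. -/
noncomputable def om11 (n : ℕ) (x y : K11 n → ℂ) : ℂ := x ⬝ᵥ (J11 n *ᵥ y)

theorem om11_add_left {n : ℕ} (x y z : K11 n → ℂ) :
    om11 n (x + y) z = om11 n x z + om11 n y z := add_dotProduct _ _ _

theorem om11_add_right {n : ℕ} (x y z : K11 n → ℂ) :
    om11 n x (y + z) = om11 n x y + om11 n x z := by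
  simp [om11, mulVec_add, dotProduct_add]

theorem om11_smul_left {n : ℕ} (c : ℂ) (x y : K11 n → ℂ) :
    om11 n (c • x) y = c * om11 n x y := by simp [om11]

theorem om11_smul_right {n : ℕ} (c : ℂ) (x y : K11 n → ℂ) :
    om11 n x (c • y) = c * om11 n x y := by simp [om11, mulVec_smul]

theorem om11_swap {n : ℕ} (x y : K11 n → ℂ) : om11 n x y = -om11 n y x := by
  rw [om11, om11, dotProduct_mulVec, ← mulVec_transpose, J11_transpose, neg_mulVec,
    neg_dotProduct, dotProduct_comm]

theorem om11_self {n : ℕ} (x : K11 n → ℂ) : om11 n x x = 0 := by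
  have h := om11_swap x x
  linear_combination (1 / 2 : ℂ) * h

theorem om11_sub_left {n : ℕ} (x y z : K11 n → ℂ) :
    om11 n (x - y) z = om11 n x z - om11 n y z := sub_dotProduct _ _ _

theorem om11_sub_right {n : ℕ} (x y z : K11 n → ℂ) :
    om11 n x (y - z) = om11 n x y - om11 n x z := by
  simp [om11, mulVec_sub, dotProduct_sub]

/-- Invariance under the transvections `x ↦ x + z ω(u, x) u` for arbitrary complex `u` and `z`. -/
theorem eval_transvection {n : ℕ} {f : MvPolynomial (Idx11 n) ℂ} (hf : IsInv11 n f)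
    (u v w : K11 n → ℂ) (z : ℂ) :
    eval (Sum.elim (v + (z * om11 n u v) • u) (w + (z * om11 n u w) • u)) f =
      eval (Sum.elim v w) f := by
  set X : Matrix (K11 n) (K11 n) ℂ := vecMulVec u u * J11 n with hX
  have hXv : ∀ x, X *ᵥ x = om11 n u x • u := by
    intro x
    rw [hX, ← mulVec_mulVec, vecMulVec_mulVec, om11]
    simp
  have hJ : Xᵀ * J11 n = -(J11 n * X) := by
    rw [hX, transpose_mul, transpose_vecMulVec, J11_transpose, neg_mul, neg_mul, mul_assoc]
  set γ : ℂ → Idx11 n → ℂ := fun s =>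
    Sum.elim (v + (s * om11 n u v) • u) (w + (s * om11 n u w) • u) with hγ
  -- `X` kills `u`, hence the velocity `X·γ(s)` of the line `γ` is constant.
  have hact : ∀ s, act11 n X (γ s) = Sum.elim (om11 n u v • u) (om11 n u w • u) := by
    intro s
    rw [act11_eq, hXv, hXv]
    simp [hγ, om11_add_right, om11_smul_right, om11_self]
  have hd : ∀ s i, HasDerivAt (fun s => γ s i) (act11 n X (γ s) i) s := by
    intro s i
    rw [hact]
    rcases i with i | i
    · simpa [hγ] using (((hasDerivAt_id s).mul_const (om11 n u v)).mul_const (u i)).const_add (v i)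
    · simpa [hγ] using (((hasDerivAt_id s).mul_const (om11 n u w)).mul_const (u i)).const_add (w i)
  have hder : ∀ s, HasDerivAt (fun s => eval (γ s) f) 0 s := fun s =>
    (hasDerivAt_eval f (hd s)).congr_deriv (lieD_eq_zero hf hJ (γ s))
  have := is_const_of_deriv_eq_zero (fun s => (hder s).differentiableAt)
    (fun s => (hder s).deriv) z 0
  simpa [hγ] using this

/-! ### Transitivity on hyperbolic pairs -/

/-- The transvection along `v' - v` takes `v` to `v'` when `ω(v, v') ≠ 0`. -/
theorem move_fst_aux {n : ℕ} {f : MvPolynomial (Idx11 n) ℂ} (hf : IsInv11 n f)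
    {v v' : K11 n → ℂ} (w : K11 n → ℂ) (h : om11 n v v' ≠ 0) :
    ∃ w', om11 n v' w' = om11 n v w ∧ eval (Sum.elim v' w') f = eval (Sum.elim v w) f := by
  have h' : om11 n v' v ≠ 0 := by rw [om11_swap]; exact neg_ne_zero.mpr h
  have ht := eval_transvection hf (v' - v) v w (om11 n v' v)⁻¹
  have e : om11 n (v' - v) v = om11 n v' v := by rw [om11_sub_left, om11_self, sub_zero]
  rw [e, inv_mul_cancel₀ h', one_smul, add_sub_cancel] at ht
  refine ⟨_, ?_, ht⟩
  rw [om11_add_right, om11_smul_right, om11_sub_left, om11_sub_right, om11_self,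
    om11_swap v v'] at *
  field_simp
  ring

/-- The transvection along `w' - w` takes `w` to `w'` and fixes `v`, as `ω` pairs `v` equally
with both. -/
theorem move_snd_aux {n : ℕ} {f : MvPolynomial (Idx11 n) ℂ} (hf : IsInv11 n f)
    {v w w' : K11 n → ℂ} (he : om11 n v w' = om11 n v w) (h : om11 n w w' ≠ 0) :
    eval (Sum.elim v w') f = eval (Sum.elim v w) f := by
  have h' : om11 n w' w ≠ 0 := by rw [om11_swap]; exact neg_ne_zero.mpr h
  have ht := eval_transvection hf (w' - w) v w (om11 n w' w)⁻¹
  have e : om11 n (w' - w) w = om11 n w' w := by rw [om11_sub_left, om11_self, sub_zero]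
  have e' : om11 n (w' - w) v = 0 := by
    rw [om11_swap, om11_sub_right, he, sub_self, neg_zero]
  rw [e, inv_mul_cancel₀ h', one_smul, add_sub_cancel, e'] at ht
  simpa using ht

/-- The non-orthogonality assumed in `move_snd_aux` is dispensable when `ω(v, w) = 1`:
`w + v` serves as an intermediate step. -/
theorem move_snd {n : ℕ} {f : MvPolynomial (Idx11 n) ℂ} (hf : IsInv11 n f)
    {v w w' : K11 n → ℂ} (h1 : om11 n v w = 1) (h2 : om11 n v w' = 1) :
    eval (Sum.elim v w') f = eval (Sum.elim v w) f := by
  by_cases h : om11 n w w' = 0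
  · have a : eval (Sum.elim v (w + v)) f = eval (Sum.elim v w) f := by
      apply move_snd_aux hf
      · rw [om11_add_right, om11_self, add_zero]
      · rw [om11_add_right, om11_self, om11_swap w v, h1]; norm_num
    rw [← a]
    apply move_snd_aux hf
    · rw [om11_add_right, om11_self, add_zero, h1, h2]
    · rw [om11_add_left, h, h2]; norm_num
  · exact move_snd_aux hf (h2.trans h1.symm) h

/-- An invariant takes the same value on all pairs with `ω(v, w) = 1`. The first vector is moved in
two steps, through an `x` orthogonal to neither the old nor the new one. -/
theorem eval_hyperbolic {n : ℕ} {f : MvPolynomial (Idx11 n) ℂ} (hf : IsInv11 n f)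
    {v w v' w' : K11 n → ℂ} (h1 : om11 n v w = 1) (h2 : om11 n v' w' = 1) :
    eval (Sum.elim v w) f = eval (Sum.elim v' w') f := by
  obtain ⟨x, hx1, hx2⟩ : ∃ x, om11 n v x ≠ 0 ∧ om11 n x v' ≠ 0 := by
    by_cases ha : om11 n w v' = 0
    · by_cases hb : om11 n v w' = 0
      · refine ⟨w + w', ?_, ?_⟩
        · rw [om11_add_right, h1, hb]; norm_num
        · rw [om11_add_left, ha, om11_swap w', h2]; norm_num
      · exact ⟨w', hb, by rw [om11_swap, h2]; norm_num⟩
    · exact ⟨w, by rw [h1]; norm_num, ha⟩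
  obtain ⟨y, hy, hye⟩ := move_fst_aux hf w hx1
  obtain ⟨y', hy', hye'⟩ := move_fst_aux hf y hx2
  rw [← hye, ← hye']
  exact move_snd hf h2 (hy'.trans (hy.trans h1))

/-! ### The invariant `ω` and the dimension count -/

/-- The symplectic form `ω(v, w)` as a polynomial in the coordinates of `(v, w)`. -/
noncomputable def omPoly (n : ℕ) : MvPolynomial (Idx11 n) ℂ :=
  ∑ i : Fin n, (X (Sum.inl (Sum.inl i)) * X (Sum.inr (Sum.inr i)) -
    X (Sum.inl (Sum.inr i)) * X (Sum.inr (Sum.inl i)))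

theorem eval_omPoly {n : ℕ} (p : Idx11 n → ℂ) :
    eval p (omPoly n) = om11 n (p ∘ Sum.inl) (p ∘ Sum.inr) := by
  simp [omPoly, om11, J11, fromBlocks_mulVec, dotProduct, neg_mulVec, sub_eq_add_neg,
    Finset.sum_add_distrib]

theorem omPoly_isHomogeneous (n : ℕ) : (omPoly n).IsHomogeneous 2 :=
  IsHomogeneous.sum _ _ _ fun _ _ =>
    ((isHomogeneous_X _ _).mul (isHomogeneous_X _ _)).sub
      ((isHomogeneous_X _ _).mul (isHomogeneous_X _ _))

theorem omPoly_isInv (n : ℕ) : IsInv11 n (omPoly n) := by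
  intro g hg p
  rw [eval_omPoly, eval_omPoly, act11_eq, Sum.elim_comp_inl, Sum.elim_comp_inr, om11, om11,
    mulVec_mulVec, ← vecMul_transpose, ← dotProduct_mulVec, mulVec_mulVec, ← mul_assoc, hg.2]

theorem exists_hyperbolic {n : ℕ} (hn : 1 ≤ n) : ∃ v w : K11 n → ℂ, om11 n v w = 1 := by
  let i : Fin n := ⟨0, hn⟩
  refine ⟨Pi.single (Sum.inl i) 1, Pi.single (Sum.inr i) 1, ?_⟩
  simp [om11, J11]

theorem sum_elim_comp {n : ℕ} (p : Idx11 n → ℂ) :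
    Sum.elim (p ∘ Sum.inl) (p ∘ Sum.inr) = p := Sum.elim_comp_inl_inr p

theorem eq_C_mul_omPoly_pow {n m : ℕ} {f : MvPolynomial (Idx11 n) ℂ} (hf : IsInv11 n f)
    (hh : f.IsHomogeneous (2 * m)) {v₀ w₀ : K11 n → ℂ} (h₀ : om11 n v₀ w₀ = 1) :
    f = C (eval (Sum.elim v₀ w₀) f) * omPoly n ^ m := by
  have hW : omPoly n ≠ 0 := by
    intro h
    have := eval_omPoly (Sum.elim v₀ w₀)
    rw [h, Sum.elim_comp_inl, Sum.elim_comp_inr, h₀] at this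
    simp at this
  -- Multiplying by `ω` reduces the identity to points where `ω ≠ 0`.
  refine mul_right_cancel₀ hW (MvPolynomial.funext fun p => ?_)
  simp only [map_mul, map_pow, eval_C]
  by_cases hd : eval p (omPoly n) = 0
  · simp [hd]
  congr 1
  obtain ⟨c, hc⟩ := IsAlgClosed.exists_pow_nat_eq (eval p (omPoly n)) (n := 2) (by norm_num)
  have hc0 : c ≠ 0 := by
    rintro rfl
    exact hd (by rw [← hc]; norm_num)
  have hp : c • (c⁻¹ • p) = p := smul_inv_smul₀ hc0 p
  have h1 : om11 n ((c⁻¹ • p) ∘ Sum.inl) ((c⁻¹ • p) ∘ Sum.inr) = 1 := by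
    rw [← eval_omPoly, eval_smul_of_isHomogeneous (omPoly_isHomogeneous n), ← hc, ← mul_pow,
      inv_mul_cancel₀ hc0, one_pow]
  have h2 := eval_hyperbolic hf h1 h₀
  rw [sum_elim_comp] at h2
  calc eval p f = eval (c • (c⁻¹ • p)) f := by rw [hp]
    _ = c ^ (2 * m) * eval (c⁻¹ • p) f := eval_smul_of_isHomogeneous hh _ _
    _ = _ := by rw [h2, pow_mul, hc, mul_comm]

theorem isSp_neg_one (n : ℕ) : IsSp n (-1) := by
  refine ⟨?_, by simp⟩
  rw [Matrix.mem_unitaryGroup_iff]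
  simp

theorem eq_zero_of_odd {n N : ℕ} (hN : ¬ Even N) {f : MvPolynomial (Idx11 n) ℂ}
    (hf : IsInv11 n f) (hh : f.IsHomogeneous N) : f = 0 := by
  refine MvPolynomial.funext fun p => ?_
  have h1 := hf _ (isSp_neg_one n) p
  have h2 : act11 n (-1) p = (-1 : ℂ) • p := by
    rw [act11_eq]
    ext i
    rcases i with i | i <;> simp [neg_mulVec]
  rw [h2, eval_smul_of_isHomogeneous hh, (Nat.not_even_iff_odd.mp hN).neg_one_pow] at h1
  rw [map_zero]
  linear_combination (-1 / 2 : ℂ) * h1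

/-- The space of `Sp(n)`-invariant polynomial functions on `ℂ²ⁿ ⊕ ℂ²ⁿ`, homogeneous of
total degree `N`, has dimension `1` if `N` is even and `0` if `N` is odd. -/
theorem stmt_11 (n : ℕ) (hn : 1 ≤ n) (N : ℕ) :
    Module.finrank ℂ (invHomog11 n N) = if Even N then 1 else 0 := by
  split_ifs with hN
  · obtain ⟨m, rfl⟩ := even_iff_exists_two_mul.mp hN
    obtain ⟨v₀, w₀, h₀⟩ := exists_hyperbolic hn
    have hW : omPoly n ^ m ≠ 0 := by
      intro h
      have := congrArg (eval (Sum.elim v₀ w₀)) h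
      rw [map_pow, eval_omPoly, Sum.elim_comp_inl, Sum.elim_comp_inr, h₀] at this
      simp at this
    have hspan : invHomog11 n (2 * m) = Submodule.span ℂ {omPoly n ^ m} := by
      apply le_antisymm
      · intro f hf
        rw [eq_C_mul_omPoly_pow hf.1 hf.2 h₀, ← smul_eq_C_mul]
        exact Submodule.smul_mem _ _ (Submodule.mem_span_singleton_self _)
      · rw [Submodule.span_singleton_le_iff_mem]
        refine ⟨fun g hg p => ?_, (omPoly_isHomogeneous n).pow m⟩
        rw [map_pow, map_pow, omPoly_isInv n g hg p]
    rw [hspan, finrank_span_singleton hW]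
  · have hbot : invHomog11 n N = ⊥ :=
      (Submodule.eq_bot_iff _).mpr fun f hf => eq_zero_of_odd hN hf.1 hf.2
    rw [hbot, finrank_bot]
end

section
/- Consider the linear action of SU(2) on the space M₂(ℂ) of 2×2 complex matrices by left multiplication, g·X = gX, and the induced action on the algebra ℂ[M₂(ℂ)] of polynomial functions by (g·f)(X) = f(g⁻¹X). Then the subalgebra of SU(2)-invariant polynomial functions equals the ℂ-subalgebra generated by the determinant function X ↦ det X = X₁₁X₂₂ − X₁₂X₂₁, and det is transcendental over ℂ. In particular, the invariant algebra is a polynomial ring generated by a single homogeneous element of degree 2. -/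
/-!
The inclusion of `ℂ[det]` in the invariants is multiplicativity of the determinant. For the converse,
fix an invariant `f`. Along an entire curve `z ↦ G z` of matrices lying in `SU(2)` for real `z`, the
function `z ↦ f (G z · X) - f X` is entire and vanishes on the real line, hence everywhere
(`inv_of_real`). Applied to the diagonal torus and to the rotations, this makes `f` invariant under
`diag(u, u⁻¹)` for every `u ≠ 0` and under all complex rotations. By a complex Euler decomposition
(`inv_of_det_one`) products of these give every matrix of `SL₂(ℂ)` with nonzero entries. Writing
a generic `X` as `g · diag(1, det X)` with `g` such a matrix gives `f X = f (diag(1, det X)) = h (det X)`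
for a one-variable polynomial `h`. The identity holds off the zero locus of a nonzero polynomial,
so it holds in the polynomial ring, which is a domain.
-/

open MvPolynomial

/-- Coordinates on `M₂(ℂ)`: matrix entries. -/
abbrev Idx13 := Fin 2 × Fin 2

/-- The action of `SU(2)` on `M₂(ℂ)` by left multiplication, `g·X = gX`, written on
coordinates of points. -/
noncomputable def act13 (g : Matrix (Fin 2) (Fin 2) ℂ) (p : Idx13 → ℂ) : Idx13 → ℂ :=
  fun ij => ∑ k, g ij.1 k * p (k, ij.2)

/-- The determinant `X ↦ X₁₁X₂₂ − X₁₂X₂₁`, as a polynomial in the matrix entries. -/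
noncomputable def detPoly13 : MvPolynomial Idx13 ℂ :=
  X (0, 0) * X (1, 1) - X (0, 1) * X (1, 0)

/-- The polynomial function `f` on `M₂(ℂ)` is unchanged by left multiplication by `g`. -/
def InvBy (f : MvPolynomial Idx13 ℂ) (g : Matrix (Fin 2) (Fin 2) ℂ) : Prop :=
  ∀ p : Idx13 → ℂ, eval (act13 g p) f = eval p f

lemma act13_mul (g h : Matrix (Fin 2) (Fin 2) ℂ) (p : Idx13 → ℂ) :
    act13 (g * h) p = act13 g (act13 h p) := by
  funext ij
  simp only [act13, Matrix.mul_apply, Fin.sum_univ_two]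
  ring

lemma InvBy.mul {f : MvPolynomial Idx13 ℂ} {g h : Matrix (Fin 2) (Fin 2) ℂ}
    (hg : InvBy f g) (hh : InvBy f h) : InvBy f (g * h) := by
  intro p
  rw [act13_mul, hg, hh]

/-- Analytic continuation of invariance from the real points of an entire curve of matrices. -/
lemma inv_of_real {f : MvPolynomial Idx13 ℂ} (G : ℂ → Matrix (Fin 2) (Fin 2) ℂ)
    (hG : ∀ i j, Differentiable ℂ fun z => G z i j)
    (hreal : ∀ x : ℝ, InvBy f (G x)) (z : ℂ) : InvBy f (G z) := by
  intro p
  have hact : ∀ ij, Differentiable ℂ fun z => act13 (G z) p ij := by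
    intro ij
    have h0 := hG ij.1 0
    have h1 := hG ij.1 1
    simp only [act13, Fin.sum_univ_two]
    fun_prop
  have han : AnalyticOnNhd ℂ (fun z => eval (act13 (G z) p) f) Set.univ := by
    simp only [← MvPolynomial.aeval_eq_eval]
    exact AnalyticOnNhd.aeval_mvPolynomial
      (fun ij => (hact ij).differentiableOn.analyticOnNhd isOpen_univ) f
  have hfreq : ∃ᶠ z in nhdsWithin (0 : ℂ) {0}ᶜ,
      eval (act13 (G z) p) f = (fun _ => eval p f) z := by
    have ht : Filter.Tendsto (fun x : ℝ => (x : ℂ)) (nhdsWithin 0 {0}ᶜ)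
        (nhdsWithin (0 : ℂ) {0}ᶜ) := by
      refine tendsto_nhdsWithin_of_tendsto_nhds_of_eventually_within _ ?_ ?_
      · exact (Complex.continuous_ofReal.tendsto' 0 0 (by simp)).mono_left nhdsWithin_le_nhds
      · filter_upwards [self_mem_nhdsWithin] with x hx
        simpa using hx
    refine ht.frequently (Filter.Eventually.frequently ?_)
    exact Filter.Eventually.of_forall fun x => hreal x p
  exact congrFun (han.eq_of_frequently_eq analyticOnNhd_const hfreq) z

lemma inv_rot {f : MvPolynomial Idx13 ℂ}
    (hf : ∀ g ∈ Matrix.specialUnitaryGroup (Fin 2) ℂ, InvBy f g) (z : ℂ) :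
    InvBy f !![Complex.cos z, -Complex.sin z; Complex.sin z, Complex.cos z] := by
  refine inv_of_real
    (fun z => !![Complex.cos z, -Complex.sin z; Complex.sin z, Complex.cos z]) ?_ ?_ z
  · intro i j
    fin_cases i <;> fin_cases j <;> simp
  · intro x
    apply hf
    have h := Complex.cos_sq_add_sin_sq (x : ℂ)
    rw [Matrix.mem_specialUnitaryGroup_iff, Matrix.mem_unitaryGroup_iff]
    refine ⟨?_, by rw [Matrix.det_fin_two_of]; linear_combination h⟩
    ext i j
    fin_cases i <;> fin_cases j <;>
      simp [Matrix.mul_apply, Fin.sum_univ_two, ← Complex.cos_conj, ← Complex.sin_conj] <;>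
      grind

lemma inv_torus {f : MvPolynomial Idx13 ℂ}
    (hf : ∀ g ∈ Matrix.specialUnitaryGroup (Fin 2) ℂ, InvBy f g) {u : ℂ} (hu : u ≠ 0) :
    InvBy f !![u, 0; 0, u⁻¹] := by
  have key : ∀ z : ℂ,
      InvBy f !![Complex.exp (z * Complex.I), 0; 0, Complex.exp (-(z * Complex.I))] := by
    refine inv_of_real
      (fun z => !![Complex.exp (z * Complex.I), 0; 0, Complex.exp (-(z * Complex.I))]) ?_ ?_
    · intro i j
      fin_cases i <;> fin_cases j <;> simp
    · intro x
      apply hf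
      rw [Matrix.mem_specialUnitaryGroup_iff, Matrix.mem_unitaryGroup_iff]
      refine ⟨?_, by simp [Matrix.det_fin_two_of, ← Complex.exp_add]⟩
      ext i j
      fin_cases i <;> fin_cases j <;>
        simp [Matrix.mul_apply, Fin.sum_univ_two, ← Complex.exp_conj, ← Complex.exp_add]
  have h := key (Complex.log u * -Complex.I)
  have e : Complex.log u * -Complex.I * Complex.I = Complex.log u := by
    linear_combination -Complex.log u * Complex.I_mul_I
  rwa [e, Complex.exp_neg, Complex.exp_log hu] at h

/-- Euler decomposition: a matrix of determinant one with nonzero entries is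
`diag(u, u⁻¹) * rotation * diag(v, v⁻¹)` over `ℂ`. -/
lemma inv_of_det_one {f : MvPolynomial Idx13 ℂ}
    (hf : ∀ g ∈ Matrix.specialUnitaryGroup (Fin 2) ℂ, InvBy f g) {a b c d : ℂ}
    (ha : a ≠ 0) (hb : b ≠ 0) (hc : c ≠ 0) (hd : d ≠ 0) (hdet : a * d - b * c = 1) :
    InvBy f !![a, b; c, d] := by
  -- Writing `C`, `S` for the cosine and sine, the product is
  -- `!![u * v * C, -(u / v) * S; (v / u) * S, C / (u * v)]`; hence `C ^ 2 = a * d`,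
  -- `v ^ 2 = a * c / (C * S)` and `u = a / (C * v)`.
  obtain ⟨C, hC⟩ := IsAlgClosed.exists_eq_mul_self (a * d)
  obtain ⟨θ, rfl⟩ := Complex.cos_surjective C
  have hcs := Complex.cos_sq_add_sin_sq θ
  have hrot := inv_rot hf θ
  generalize Complex.cos θ = C at *
  generalize Complex.sin θ = S at *
  have hS : S * S = -(b * c) := by linear_combination hcs + hC - hdet
  have hC0 : C ≠ 0 := by
    rintro rfl
    exact mul_ne_zero ha hd (by simpa using hC)
  have hS0 : S ≠ 0 := by
    rintro rfl
    exact mul_ne_zero hb hc (by simpa using hS)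
  obtain ⟨v, hv⟩ := IsAlgClosed.exists_eq_mul_self (a * c / (C * S))
  have hv0 : v ≠ 0 := by
    rintro rfl
    simp [ha, hc, hC0, hS0] at hv
  have hv' : v * v * C * S = a * c := by
    rw [← hv]; field_simp
  have hu0 : a / (C * v) ≠ 0 := by positivity
  have h := ((inv_torus hf hu0).mul hrot).mul (inv_torus hf hv0)
  convert h using 1
  ext i j
  fin_cases i <;> fin_cases j <;> simp [Matrix.mul_apply, Fin.sum_univ_two]
  · field_simp
  · field_simp
    grind
  · field_simp
    grind
  · field_simp
    linear_combination hC

/-- The algebra of `SU(2)`-invariant polynomial functions on `M₂(ℂ)` (for the action by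
left multiplication) is the ℂ-subalgebra generated by `det`, and `det` is transcendental
over ℂ. -/
theorem stmt_13 :
    {f : MvPolynomial Idx13 ℂ |
        ∀ g ∈ Matrix.specialUnitaryGroup (Fin 2) ℂ, ∀ p : Idx13 → ℂ,
          eval (act13 g p) f = eval p f} =
      (Algebra.adjoin ℂ {detPoly13} : Subalgebra ℂ (MvPolynomial Idx13 ℂ)) ∧
    Transcendental ℂ detPoly13 := by
  constructor
  · ext f
    simp only [Set.mem_ofPred_eq, SetLike.mem_coe]
    rw [Algebra.adjoin_singleton_eq_range_aeval]
    have hev : ∀ (h : Polynomial ℂ) (p : Idx13 → ℂ),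
        eval p (Polynomial.aeval detPoly13 h) = h.eval (eval p detPoly13) := by
      intro h p
      rw [← MvPolynomial.coe_aeval_eq_eval, RingHom.coe_coe, ← Polynomial.aeval_algHom_apply,
        Polynomial.coe_aeval_eq_eval]
    constructor
    · intro hf
      -- `h (t) = f (diag (1, t))`
      set h : Polynomial ℂ := MvPolynomial.aeval
        (fun ij : Idx13 => if ij = (0, 0) then 1 else if ij = (1, 1) then Polynomial.X else 0) f
        with hh
      have hheval : ∀ t : ℂ, h.eval t = eval
          (fun ij : Idx13 => if ij = (0, 0) then 1 else if ij = (1, 1) then t else 0) f := by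
        intro t
        rw [hh, ← Polynomial.coe_aeval_eq_eval, MvPolynomial.comp_aeval_apply,
          MvPolynomial.aeval_eq_eval]
        congr 2
        funext ij
        split_ifs <;> simp
      refine ⟨h, ?_⟩
      have hzero : (X (0, 0) * X (0, 1) * X (1, 0) * X (1, 1) * detPoly13) *
          (f - Polynomial.aeval detPoly13 h) = 0 := by
        apply MvPolynomial.funext
        intro p
        by_cases hp : eval p (X (0, 0) * X (0, 1) * X (1, 0) * X (1, 1) * detPoly13) = 0
        · rw [map_mul, hp]; simp
        · have hD : eval p detPoly13 = p (0, 0) * p (1, 1) - p (0, 1) * p (1, 0) := by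
            simp [detPoly13]
          simp only [map_mul, eval_X, mul_eq_zero, not_or] at hp
          obtain ⟨⟨⟨⟨ha, hb⟩, hc⟩, hd⟩, hD0⟩ := hp
          rw [map_mul, map_sub, hev, hheval]
          generalize eval p detPoly13 = D at *
          -- `X = !![a, b / D; c, d / D] * diag (1, D)` with `D = det X`
          have hi := inv_of_det_one hf ha (div_ne_zero hb hD0) hc (div_ne_zero hd hD0)
            (by field_simp; rw [hD]) (fun ij : Idx13 =>
              if ij = (0, 0) then 1 else if ij = (1, 1) then D else 0)
          rw [← hi, sub_eq_zero.2, mul_zero, map_zero]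
          congr 2
          funext ⟨i, j⟩
          fin_cases i <;> fin_cases j <;> simp [act13, hD0]
      have hne : (X (0, 0) * X (0, 1) * X (1, 0) * X (1, 1) * detPoly13 :
          MvPolynomial Idx13 ℂ) ≠ 0 := by
        intro h0
        have := congrArg (eval fun ij : Idx13 => if ij = (0, 0) then 2 else 1) h0
        simp [detPoly13] at this
        norm_num at this
      exact (sub_eq_zero.1 ((mul_eq_zero.1 hzero).resolve_left hne)).symm
    · rintro ⟨h, rfl⟩ g hg p
      have hdet := (Matrix.mem_specialUnitaryGroup_iff.1 hg).2
      rw [Matrix.det_fin_two] at hdet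
      change eval _ (Polynomial.aeval detPoly13 h) = eval _ (Polynomial.aeval detPoly13 h)
      rw [hev, hev]
      congr 1
      simp only [detPoly13, act13, Fin.sum_univ_two, map_sub, map_mul, eval_X]
      linear_combination (p (0, 0) * p (1, 1) - p (0, 1) * p (1, 0)) * hdet
  · -- The substitution `X ↦ diag (t, 1)` sends `det` to the variable `t`.
    intro halg
    have h2 := halg.algHom (MvPolynomial.aeval
      (fun ij : Idx13 => if ij = (0, 0) then (Polynomial.X : Polynomial ℂ)
        else if ij = (1, 1) then 1 else 0))
    simp [detPoly13] at h2
    exact Polynomial.transcendental_X ℂ h2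
end

section
/- Consider the linear action of SU(2) × SU(2) on V = M₂(ℂ) ⊕ 𝔰𝔩₂(ℂ) given by (g, h)·(X, Y) = (g X h⁻¹, h Y h⁻¹), and the induced action on the algebra ℂ[V] of polynomial functions on V by (γ·f)(p) = f(γ⁻¹·p). Then the subalgebra of invariant polynomial functions equals the ℂ-subalgebra generated by the two functions (X,Y) ↦ det X and (X,Y) ↦ det Y; these two functions are algebraically independent over ℂ. In particular, the invariant algebra is a polynomial ring generated by two algebraically independent homogeneous elements of degree 2. -/
/-!
The polynomial functions on `V` are determined by their values on the compact real form of `V`,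
where `X` is a real multiple of a special unitary matrix and `Y` is traceless skew-Hermitian
(`eq_of_eval_realForm`: this real form is Zariski dense). On it the group `SU(2) × SU(2)` brings
every point to a normal form `(r • 1, diag (i t, -i t))` with `r² = det X` and `t² = det Y`
(`exists_act_normalForm`; points in a dense open cone suffice, which avoids degenerate
cases). Hence an invariant `f` is determined by the polynomial `P(r, t)`, its restriction to normal
forms. The elements `(-1, 1)` and `(w, w)`, with `w` a Weyl element, act on normal forms by
`r ↦ -r` and `t ↦ -t`, so `P` is even in both variables, i.e. `P(r, t) = Q(r², t²)`
(`exists_even_part`), and `f = Q(det X, det Y)`.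

Algebraic independence holds because `(det X, det Y) : V → ℂ²` is surjective.
-/

open MvPolynomial

/-- Coordinates on `V = M₂(ℂ) ⊕ 𝔰𝔩₂(ℂ)`: the four matrix entries of `X ∈ M₂(ℂ)`,
together with the coordinates `(a, b, c)` of `Y = [[a, b], [c, −a]] ∈ 𝔰𝔩₂(ℂ)`. -/
abbrev Idx14 := (Fin 2 × Fin 2) ⊕ Fin 3

/-- The traceless matrix `Y = [[a, b], [c, −a]]` with coordinates read off from a point. -/
noncomputable def slMat (p : Idx14 → ℂ) : Matrix (Fin 2) (Fin 2) ℂ :=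
  !![p (Sum.inr 0), p (Sum.inr 1); p (Sum.inr 2), -p (Sum.inr 0)]

/-- The action of `SU(2) × SU(2)` on `V = M₂(ℂ) ⊕ 𝔰𝔩₂(ℂ)`:
`(g,h)·(X,Y) = (g X h⁻¹, h Y h⁻¹)`, written on coordinates of points. -/
noncomputable def act14 (g h : Matrix (Fin 2) (Fin 2) ℂ) (p : Idx14 → ℂ) : Idx14 → ℂ :=
  Sum.elim
    (fun ij => (g * Matrix.of (fun k l => p (Sum.inl (k, l))) * h⁻¹) ij.1 ij.2)
    (fun m => ![(h * slMat p * h⁻¹) 0 0, (h * slMat p * h⁻¹) 0 1,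
      (h * slMat p * h⁻¹) 1 0] m)

/-- The function `(X,Y) ↦ det X`, as a polynomial. -/
noncomputable def detXPoly : MvPolynomial Idx14 ℂ :=
  X (Sum.inl (0, 0)) * X (Sum.inl (1, 1)) - X (Sum.inl (0, 1)) * X (Sum.inl (1, 0))

/-- The function `(X,Y) ↦ det Y = −a² − bc`, as a polynomial. -/
noncomputable def detYPoly : MvPolynomial Idx14 ℂ :=
  -(X (Sum.inr 0)) ^ 2 - X (Sum.inr 1) * X (Sum.inr 2)

/-! ### The generators -/

lemma eval_aeval_eq {σ τ : Type*} (x : τ → ℂ) (F : σ → MvPolynomial τ ℂ) (f : MvPolynomial σ ℂ) :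
    eval x (aeval F f) = eval (fun i => eval x (F i)) f := by
  induction f using MvPolynomial.induction_on with
  | C a => simp
  | add p q hp hq => simp only [map_add, hp, hq]
  | mul_X p n hp => simp only [map_mul, hp, aeval_X, eval_X]

lemma eval_detXPoly (p : Idx14 → ℂ) :
    eval p detXPoly = (Matrix.of (fun k l => p (Sum.inl (k, l))) : Matrix (Fin 2) (Fin 2) ℂ).det := by
  simp [detXPoly, Matrix.det_fin_two]

lemma eval_detYPoly (p : Idx14 → ℂ) : eval p detYPoly = (slMat p).det := by
  simp [detYPoly, slMat, Matrix.det_fin_two]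
  ring

lemma eval_act14_detXPoly {g h : Matrix (Fin 2) (Fin 2) ℂ} (hg : g.det = 1) (hh : h.det = 1)
    (p : Idx14 → ℂ) : eval (act14 g h p) detXPoly = eval p detXPoly := by
  rw [eval_detXPoly, eval_detXPoly]
  have : (Matrix.of (fun k l => act14 g h p (Sum.inl (k, l))) : Matrix (Fin 2) (Fin 2) ℂ)
      = g * Matrix.of (fun k l => p (Sum.inl (k, l))) * h⁻¹ := by
    ext i j
    simp [act14]
  rw [this, Matrix.det_mul, Matrix.det_mul, Matrix.det_nonsing_inv, hg, hh]
  simp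

lemma slMat_act14 {g h : Matrix (Fin 2) (Fin 2) ℂ} (hh : h.det = 1) (p : Idx14 → ℂ) :
    slMat (act14 g h p) = h * slMat p * h⁻¹ := by
  -- Conjugation preserves the trace, which recovers the entry not stored in the coordinates.
  have htr : (h * slMat p * h⁻¹).trace = 0 := by
    rw [Matrix.trace_mul_comm, ← mul_assoc, Matrix.nonsing_inv_mul _ (by simp [hh]), one_mul]
    simp [slMat, Matrix.trace_fin_two]
  rw [Matrix.trace_fin_two] at htr
  ext i j
  fin_cases i <;> fin_cases j
  · simp [slMat, act14]
  · simp [slMat, act14]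
  · simp [slMat, act14]
  · change -(h * slMat p * h⁻¹) 0 0 = (h * slMat p * h⁻¹) 1 1
    linear_combination -htr

lemma eval_act14_detYPoly {g h : Matrix (Fin 2) (Fin 2) ℂ} (hh : h.det = 1)
    (p : Idx14 → ℂ) : eval (act14 g h p) detYPoly = eval p detYPoly := by
  rw [eval_detYPoly, eval_detYPoly, slMat_act14 hh, Matrix.det_mul, Matrix.det_mul,
    Matrix.det_nonsing_inv, hh]
  simp

lemma algebraicIndependent_det : AlgebraicIndependent ℂ ![detXPoly, detYPoly] := by
  rw [algebraicIndependent_iff]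
  intro Q hQ
  refine MvPolynomial.funext fun u => ?_
  -- A point of `V` with `det X = u 0` and `det Y = u 1`.
  let p : Idx14 → ℂ := Sum.elim (fun ij => !![u 0, 0; 0, 1] ij.1 ij.2) ![0, 1, -u 1]
  have h1 : (fun i => eval p ((![detXPoly, detYPoly] : Fin 2 → MvPolynomial Idx14 ℂ) i)) = u := by
    ext i
    fin_cases i <;> simp [p, detXPoly, detYPoly]
  have h2 := congrArg (eval p) hQ
  rw [eval_aeval_eq, h1] at h2
  simpa using h2

/-! ### The compact real form -/

/-- Coordinates adapted to the compact real form of `V`: a complex-linear parametrization of `V`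
carrying real points to pairs `(X, Y)` with `X` a real multiple of an element of `SU(2)` and `Y`
skew-Hermitian. -/
noncomputable def realForm (v : Idx14 → ℂ) : Idx14 → ℂ :=
  Sum.elim
    (fun ij => !![v (Sum.inl (0, 0)) + Complex.I * v (Sum.inl (0, 1)),
        v (Sum.inl (1, 0)) + Complex.I * v (Sum.inl (1, 1));
        -v (Sum.inl (1, 0)) + Complex.I * v (Sum.inl (1, 1)),
        v (Sum.inl (0, 0)) - Complex.I * v (Sum.inl (0, 1))] ij.1 ij.2)
    ![Complex.I * v (Sum.inr 0), v (Sum.inr 1) + Complex.I * v (Sum.inr 2),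
      -v (Sum.inr 1) + Complex.I * v (Sum.inr 2)]

/-- The components of `realForm` as linear polynomials. -/
noncomputable def realFormPoly : Idx14 → MvPolynomial Idx14 ℂ :=
  Sum.elim
    (fun ij => !![X (Sum.inl (0, 0)) + C Complex.I * X (Sum.inl (0, 1)),
        X (Sum.inl (1, 0)) + C Complex.I * X (Sum.inl (1, 1));
        -X (Sum.inl (1, 0)) + C Complex.I * X (Sum.inl (1, 1)),
        X (Sum.inl (0, 0)) - C Complex.I * X (Sum.inl (0, 1))] ij.1 ij.2)
    ![C Complex.I * X (Sum.inr 0), X (Sum.inr 1) + C Complex.I * X (Sum.inr 2),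
      -X (Sum.inr 1) + C Complex.I * X (Sum.inr 2)]

lemma eval_realFormPoly (v : Idx14 → ℂ) :
    (fun i => eval v (realFormPoly i)) = realForm v := by
  ext i
  rcases i with ⟨i, j⟩ | i
  · fin_cases i <;> fin_cases j <;> simp [realFormPoly, realForm]
  · fin_cases i <;> simp [realFormPoly, realForm]

lemma realForm_surjective : Function.Surjective realForm := by
  intro p
  refine ⟨Sum.elim
    (fun ij => !![(p (Sum.inl (0, 0)) + p (Sum.inl (1, 1))) / 2,
        -Complex.I * (p (Sum.inl (0, 0)) - p (Sum.inl (1, 1))) / 2;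
        (p (Sum.inl (0, 1)) - p (Sum.inl (1, 0))) / 2,
        -Complex.I * (p (Sum.inl (0, 1)) + p (Sum.inl (1, 0))) / 2] ij.1 ij.2)
    ![-Complex.I * p (Sum.inr 0), (p (Sum.inr 1) - p (Sum.inr 2)) / 2,
      -Complex.I * (p (Sum.inr 1) + p (Sum.inr 2)) / 2], ?_⟩
  have hI := Complex.I_mul_I
  ext i
  rcases i with ⟨i, j⟩ | i
  · fin_cases i <;> fin_cases j <;> simp [realForm] <;> grind
  · fin_cases i <;> simp [realForm] <;> grind

/-- Zariski density of the cone of points of the compact real form with positive coordinates. -/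
lemma eq_of_eval_realForm {f f' : MvPolynomial Idx14 ℂ}
    (H : ∀ v : Idx14 → ℝ, (∀ i, 0 < v i) →
      eval (realForm fun i => (v i : ℂ)) f = eval (realForm fun i => (v i : ℂ)) f') : f = f' := by
  have key : aeval realFormPoly f = aeval realFormPoly f' := by
    refine funext_set (fun _ => Complex.ofReal '' Set.Ioi 0)
      (fun _ => (Set.Ioi_infinite 0).image Complex.ofReal_injective.injOn) fun x hx => ?_
    choose v hv hvx using fun i => hx i (Set.mem_univ i)
    obtain rfl : (fun i => (v i : ℂ)) = x := _root_.funext hvx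
    rw [eval_aeval_eq, eval_aeval_eq, eval_realFormPoly]
    exact H v hv
  refine MvPolynomial.funext fun p => ?_
  obtain ⟨v, rfl⟩ := realForm_surjective p
  rw [← eval_realFormPoly, ← eval_aeval_eq, ← eval_aeval_eq, key]

/-! ### Normal forms -/

/-- The point `(r • 1, diag (i t, -i t))` of `V`. -/
noncomputable def normalForm (r t : ℂ) : Idx14 → ℂ :=
  Sum.elim (fun ij => !![r, 0; 0, r] ij.1 ij.2) ![Complex.I * t, 0, 0]

lemma mem_specialUnitaryGroup_two {a b : ℂ}
    (h : a * (starRingEnd ℂ) a + b * (starRingEnd ℂ) b = 1) :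
    !![a, b; -(starRingEnd ℂ) b, (starRingEnd ℂ) a] ∈
      Matrix.specialUnitaryGroup (Fin 2) ℂ := by
  rw [Matrix.mem_specialUnitaryGroup_iff, Matrix.mem_unitaryGroup_iff]
  constructor
  · ext i j
    fin_cases i <;> fin_cases j <;>
      simp [Matrix.mul_apply, Fin.sum_univ_two, Matrix.star_apply] <;>
      first | linear_combination h | ring
  · rw [Matrix.det_fin_two_of]
    linear_combination h

lemma act14_eq {g h : Matrix (Fin 2) (Fin 2) ℂ} {p q : Idx14 → ℂ}
    (hh : h.det = 1)
    (hX : g * Matrix.of (fun k l => p (Sum.inl (k, l)))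
      = Matrix.of (fun k l => q (Sum.inl (k, l))) * h)
    (hY : h * slMat p = slMat q * h) : act14 g h p = q := by
  have hu : IsUnit h.det := by simp [hh]
  ext i
  rcases i with ⟨i, j⟩ | i
  · simp [act14, hX, Matrix.mul_nonsing_inv_cancel_right _ _ hu]
  · simp only [act14, hY, Matrix.mul_nonsing_inv_cancel_right _ _ hu]
    fin_cases i <;> simp [slMat]

/-- On a dense cone of the compact real form, every point is conjugate to a normal form: the columns
of `h` are normalized eigenvectors of `Y`, and `g` is then forced to be `r⁻¹ X h`. -/
lemma exists_act_normalForm (v : Idx14 → ℝ) (hv : ∀ i, 0 < v i) :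
    ∃ r t : ℂ, ∃ g ∈ Matrix.specialUnitaryGroup (Fin 2) ℂ,
      ∃ h ∈ Matrix.specialUnitaryGroup (Fin 2) ℂ,
        act14 g h (normalForm r t) = realForm fun i => (v i : ℂ) := by
  set x := v (Sum.inl (0, 0)) with hx
  set y := v (Sum.inl (0, 1)) with hy
  set z := v (Sum.inl (1, 0)) with hz
  set w := v (Sum.inl (1, 1)) with hw
  set a := v (Sum.inr 0) with ha
  set b := v (Sum.inr 1) with hb
  set c := v (Sum.inr 2) with hc
  have hx0 : 0 < x := hv _
  have ha0 : 0 < a := hv _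
  obtain ⟨r, hr0, hr⟩ : ∃ r : ℝ, 0 < r ∧ r ^ 2 = x ^ 2 + y ^ 2 + z ^ 2 + w ^ 2 :=
    ⟨√(x ^ 2 + y ^ 2 + z ^ 2 + w ^ 2), by positivity, Real.sq_sqrt (by positivity)⟩
  obtain ⟨t, ht0, ht⟩ : ∃ t : ℝ, 0 < t ∧ t ^ 2 = a ^ 2 + b ^ 2 + c ^ 2 :=
    ⟨√(a ^ 2 + b ^ 2 + c ^ 2), by positivity, Real.sq_sqrt (by positivity)⟩
  -- `n` is the length of the eigenvector `(t + a, i (b - i c))` of `Y` for the eigenvalue `i t`.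
  obtain ⟨n, hn0, hn⟩ : ∃ n : ℝ, 0 < n ∧ n ^ 2 = (t + a) ^ 2 + b ^ 2 + c ^ 2 :=
    ⟨√((t + a) ^ 2 + b ^ 2 + c ^ 2), by positivity, Real.sq_sqrt (by positivity)⟩
  have hI := Complex.I_mul_I
  have hr0' : (r : ℂ) ≠ 0 := by exact_mod_cast hr0.ne'
  have hn0' : (n : ℂ) ≠ 0 := by exact_mod_cast hn0.ne'
  have hr' : (r : ℂ) ^ 2 = x ^ 2 + y ^ 2 + z ^ 2 + w ^ 2 := by exact_mod_cast hr
  have ht' : (t : ℂ) ^ 2 = a ^ 2 + b ^ 2 + c ^ 2 := by exact_mod_cast ht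
  have hn' : (n : ℂ) ^ 2 = (t + a) ^ 2 + b ^ 2 + c ^ 2 := by exact_mod_cast hn
  obtain ⟨G, hG⟩ : ∃ G, G = !![(x + Complex.I * y) / r, (z + Complex.I * w) / r;
      -(starRingEnd ℂ) ((z + Complex.I * w) / r),
      (starRingEnd ℂ) ((x + Complex.I * y) / r)] := ⟨_, rfl⟩
  obtain ⟨h, hh⟩ : ∃ h, h = !![((t + a) / n : ℂ), Complex.I * (b + Complex.I * c) / n;
      -(starRingEnd ℂ) (Complex.I * (b + Complex.I * c) / n),
      (starRingEnd ℂ) ((t + a) / n : ℂ)] := ⟨_, rfl⟩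
  have hGmem : G ∈ Matrix.specialUnitaryGroup (Fin 2) ℂ := by
    rw [hG]
    apply mem_specialUnitaryGroup_two
    simp only [map_div₀, map_add, map_mul, Complex.conj_ofReal, Complex.conj_I]
    field_simp
    linear_combination -hr' - ((y : ℂ) ^ 2 + w ^ 2) * hI
  have hhmem : h ∈ Matrix.specialUnitaryGroup (Fin 2) ℂ := by
    rw [hh]
    apply mem_specialUnitaryGroup_two
    simp only [map_div₀, map_add, map_mul, Complex.conj_ofReal, Complex.conj_I]
    field_simp
    grind
  refine ⟨r, t, G * h, mul_mem hGmem hhmem, h, hhmem,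
    act14_eq (Matrix.mem_specialUnitaryGroup_iff.1 hhmem).2 ?_ ?_⟩
  · have hscal : (Matrix.of fun k l => normalForm (r : ℂ) t (Sum.inl (k, l)) :
        Matrix (Fin 2) (Fin 2) ℂ) = (r : ℂ) • 1 := by
      ext i j
      fin_cases i <;> fin_cases j <;> simp [normalForm]
    have hX : (Matrix.of fun k l => realForm (fun i => (v i : ℂ)) (Sum.inl (k, l)) :
        Matrix (Fin 2) (Fin 2) ℂ) = (r : ℂ) • G := by
      rw [hG]
      ext i j
      fin_cases i <;> fin_cases j <;>
        simp [realForm, ← hx, ← hy, ← hz, ← hw] <;> field_simp <;> ring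
    rw [hscal, hX]
    simp
  · have hY : slMat (realForm fun i => (v i : ℂ)) =
        !![Complex.I * a, b + Complex.I * c; -b + Complex.I * c, -(Complex.I * a)] := by
      simp [slMat, realForm, ← ha, ← hb, ← hc]
    have hD : slMat (normalForm (r : ℂ) t) = !![Complex.I * t, 0; 0, -(Complex.I * t)] := by
      simp [slMat, normalForm]
    rw [hY, hD, hh]
    simp only [map_div₀, map_add, map_mul, Complex.conj_ofReal, Complex.conj_I]
    ext i j
    fin_cases i <;> fin_cases j <;>
      simp [Matrix.mul_apply, Fin.sum_univ_two] <;> field_simp <;> grind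

lemma act14_neg_normalForm (r t : ℂ) :
    act14 !![-1, 0; 0, -1] 1 (normalForm r t) = normalForm (-r) t := by
  refine act14_eq (by simp) ?_ (by simp [slMat, normalForm])
  ext i j
  fin_cases i <;> fin_cases j <;> simp [normalForm, Matrix.mul_apply, Fin.sum_univ_two]

lemma act14_weyl_normalForm (r t : ℂ) :
    act14 !![0, 1; -1, 0] !![0, 1; -1, 0] (normalForm r t) = normalForm r (-t) := by
  refine act14_eq (by simp [Matrix.det_fin_two]) ?_ ?_
  · ext i j
    fin_cases i <;> fin_cases j <;> simp [normalForm, Matrix.mul_apply, Fin.sum_univ_two]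
  · ext i j
    fin_cases i <;> fin_cases j <;>
      simp [slMat, normalForm, Matrix.mul_apply, Fin.sum_univ_two]

/-! ### Invariant polynomials -/

/-- Averaging over sign changes turns a polynomial in `r, t` into one in `r², t²`. -/
lemma exists_even_part (P : MvPolynomial (Fin 2) ℂ) : ∃ Q : MvPolynomial (Fin 2) ℂ, ∀ r t : ℂ,
    eval ![r, t] P + eval ![-r, t] P + eval ![r, -t] P + eval ![-r, -t] P =
      4 * eval ![r ^ 2, t ^ 2] Q := by
  induction P using MvPolynomial.induction_on' with
  | add p q hp hq =>
    obtain ⟨Q, hQ⟩ := hp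
    obtain ⟨Q', hQ'⟩ := hq
    refine ⟨Q + Q', fun r t => ?_⟩
    simp only [map_add]
    linear_combination hQ r t + hQ' r t
  | monomial u a =>
    have hev : ∀ r t : ℂ, eval ![r, t] (monomial u a) = a * (r ^ u 0 * t ^ u 1) := by
      intro r t
      rw [eval_monomial, Finsupp.prod_fintype _ _ (by simp), Fin.prod_univ_two]
      simp
    simp only [hev]
    rcases Nat.even_or_odd (u 0) with h0 | h0
    · rcases Nat.even_or_odd (u 1) with h1 | h1
      · obtain ⟨k, hk⟩ := h0.two_dvd
        obtain ⟨l, hl⟩ := h1.two_dvd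
        refine ⟨C a * X 0 ^ k * X 1 ^ l, fun r t => ?_⟩
        simp only [h0.neg_pow, h1.neg_pow]
        simp [hk, hl, pow_mul]
        ring
      · refine ⟨0, fun r t => ?_⟩
        simp only [h1.neg_pow, map_zero]
        ring
    · refine ⟨0, fun r t => ?_⟩
      simp only [h0.neg_pow, map_zero]
      ring

/-- The restriction of an invariant polynomial to normal forms is a polynomial in `r², t²`. -/
lemma exists_eval_normalForm {f : MvPolynomial Idx14 ℂ}
    (hf : ∀ g ∈ Matrix.specialUnitaryGroup (Fin 2) ℂ,
      ∀ h ∈ Matrix.specialUnitaryGroup (Fin 2) ℂ,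
      ∀ p : Idx14 → ℂ, eval (act14 g h p) f = eval p f) :
    ∃ Q : MvPolynomial (Fin 2) ℂ, ∀ r t : ℂ,
      eval (normalForm r t) f = eval ![r ^ 2, t ^ 2] Q := by
  let N : Idx14 → MvPolynomial (Fin 2) ℂ :=
    Sum.elim (fun ij => !![X 0, 0; 0, X 0] ij.1 ij.2) ![C Complex.I * X 1, 0, 0]
  have hN : ∀ r t : ℂ, eval ![r, t] (aeval N f) = eval (normalForm r t) f := by
    intro r t
    rw [eval_aeval_eq]
    congr 2
    ext i
    rcases i with ⟨i, j⟩ | i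
    · fin_cases i <;> fin_cases j <;> simp [N, normalForm]
    · fin_cases i <;> simp [N, normalForm]
  have hr : ∀ r t : ℂ, eval (normalForm (-r) t) f = eval (normalForm r t) f := by
    intro r t
    rw [← act14_neg_normalForm]
    refine hf _ ?_ _ (one_mem _) _
    simpa using mem_specialUnitaryGroup_two (a := -1) (b := 0) (by simp)
  have ht : ∀ r t : ℂ, eval (normalForm r (-t)) f = eval (normalForm r t) f := by
    intro r t
    have hw : !![0, 1; -1, 0] ∈ Matrix.specialUnitaryGroup (Fin 2) ℂ := by
      simpa using mem_specialUnitaryGroup_two (a := 0) (b := 1) (by simp)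
    rw [← act14_weyl_normalForm]
    exact hf _ hw _ hw _
  obtain ⟨Q, hQ⟩ := exists_even_part (aeval N f)
  refine ⟨Q, fun r t => ?_⟩
  have := hQ r t
  simp only [hN, hr, ht] at this
  linear_combination this / 4

lemma mem_adjoin_of_invariant {f : MvPolynomial Idx14 ℂ}
    (hf : ∀ g ∈ Matrix.specialUnitaryGroup (Fin 2) ℂ,
      ∀ h ∈ Matrix.specialUnitaryGroup (Fin 2) ℂ,
      ∀ p : Idx14 → ℂ, eval (act14 g h p) f = eval p f) :
    f ∈ Algebra.adjoin ℂ {detXPoly, detYPoly} := by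
  obtain ⟨Q, hQ⟩ := exists_eval_normalForm hf
  have key : f = aeval ![detXPoly, detYPoly] Q := by
    refine eq_of_eval_realForm fun v hv => ?_
    obtain ⟨r, t, g, hg, h, hh, hact⟩ := exists_act_normalForm v hv
    have hg1 := (Matrix.mem_specialUnitaryGroup_iff.1 hg).2
    have hh1 := (Matrix.mem_specialUnitaryGroup_iff.1 hh).2
    rw [← hact, hf g hg h hh, hQ, eval_aeval_eq]
    congr 2
    ext i
    fin_cases i
    · simp [eval_act14_detXPoly hg1 hh1, eval_detXPoly, normalForm, Matrix.det_fin_two, sq]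
    · simp [eval_act14_detYPoly hh1, eval_detYPoly, normalForm, slMat, Matrix.det_fin_two]
      linear_combination t ^ 2 * Complex.I_mul_I
  rw [key, show ({detXPoly, detYPoly} : Set (MvPolynomial Idx14 ℂ)) =
    Set.range ![detXPoly, detYPoly] by simp [Set.pair_comm], Algebra.adjoin_range_eq_range_aeval]
  exact ⟨Q, rfl⟩

/-- The algebra of `SU(2) × SU(2)`-invariant polynomial functions on `M₂(ℂ) ⊕ 𝔰𝔩₂(ℂ)`
(for the action `(g,h)·(X,Y) = (gXh⁻¹, hYh⁻¹)`) is the ℂ-subalgebra generated by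
`det X` and `det Y`, and these two functions are algebraically independent over ℂ. -/
theorem stmt_14 :
    {f : MvPolynomial Idx14 ℂ |
        ∀ g ∈ Matrix.specialUnitaryGroup (Fin 2) ℂ,
        ∀ h ∈ Matrix.specialUnitaryGroup (Fin 2) ℂ,
        ∀ p : Idx14 → ℂ, eval (act14 g h p) f = eval p f} =
      (Algebra.adjoin ℂ {detXPoly, detYPoly} : Subalgebra ℂ (MvPolynomial Idx14 ℂ)) ∧
    AlgebraicIndependent ℂ ![detXPoly, detYPoly] := by
  refine ⟨Set.Subset.antisymm (fun f hf => mem_adjoin_of_invariant hf) fun f hf => ?_,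
    algebraicIndependent_det⟩
  intro g hg h hh p
  have hg1 := (Matrix.mem_specialUnitaryGroup_iff.1 hg).2
  have hh1 := (Matrix.mem_specialUnitaryGroup_iff.1 hh).2
  induction hf using Algebra.adjoin_induction with
  | mem q hq =>
    rcases hq with rfl | rfl
    · exact eval_act14_detXPoly hg1 hh1 p
    · exact eval_act14_detYPoly hh1 p
  | algebraMap c => simp [MvPolynomial.algebraMap_eq]
  | add q q' _ _ hq hq' => rw [map_add, map_add, hq, hq']
  | mul q q' _ _ hq hq' => rw [map_mul, map_mul, hq, hq']
end

section
/- Let m ≥ 1 and let f be a complex polynomial in 2m−1 variables. Suppose that f(Σᵢ₌₁^m Aᵢ², Σᵢ₌₁^m Aᵢ⁴, …, Σᵢ₌₁^m Aᵢ^{2m}, Σᵢ₌₁^{m−1} Bᵢ², Σᵢ₌₁^{m−1} Bᵢ⁴, …, Σᵢ₌₁^{m−1} Bᵢ^{2m−2}) = 0 whenever Aᵢ = 2jᵢ + 4(m−i) + 1 for 1 ≤ i ≤ m and Bᵢ = 2kᵢ + 4(m−i) + 1 for 1 ≤ i ≤ m−1, for natural numbers satisfying the interlacing condition j₁ ≥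 k₁ ≥ j₂ ≥ k₂ ≥ ⋯ ≥ j_{m−1} ≥ k_{m−1} ≥ jₘ ≥ 0. Then f is the zero polynomial. -/
/-!
Write `F` for the polynomial obtained from `f` by substituting the even power sums, with
`Aᵢ` and `Bᵢ` replaced by affine functions of free variables. The proof shows that the points
supplied by the hypothesis are numerous enough in two steps.

* The interlacing chains of natural numbers are Zariski dense
  (`eq_zero_of_forall_monotone`): a polynomial vanishing on every weakly increasing sequence of
  naturals is zero, by fixing the smallest entry `r`, applying induction to the remaining
  variables, and using that infinitely many `r` are available. Hence `F = 0`, that is, the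
  vanishing holds for arbitrary complex `Aᵢ`, `Bᵢ`.
* The power sum map `ℂⁿ → ℂⁿ` is surjective (`exists_power_sums`): Newton's identities determine
  elementary symmetric values from prescribed power sums, and `ℂ` being algebraically closed, the
  monic polynomial with these coefficients has `n` roots. Taking square roots, the even power sum
  map is surjective as well.

Hence `f` vanishes at every point of `ℂ^{2m-1}`.
-/

open MvPolynomial

open Finset in
/-- The values of the elementary symmetric polynomials that Newton's identities force when the
`k`-th power sum has the value `t k` for all `k ≥ 1`; the entry `t 0` plays no role. -/
noncomputable def newtonESymm (t : ℕ → ℂ) : ℕ → ℂ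
  | 0 => 1
  | k + 1 => (-1) ^ (k + 1 + 1) * ((k + 1 : ℕ) : ℂ)⁻¹ * (t (k + 1) +
      ∑ a ∈ ({a ∈ antidiagonal (k + 1) | a.1 ∈ Set.Ioo 0 (k + 1)}).attach,
        (-1) ^ a.1.1 * newtonESymm t a.1.1 * t a.1.2)
  decreasing_by
    have h := (mem_filter.1 a.2).2
    exact h.2

open Finset in
lemma newtonESymm_spec (t : ℕ → ℂ) (k : ℕ) (hk : 0 < k) :
    t k = (-1) ^ (k + 1) * k * newtonESymm t k -
      ∑ a ∈ antidiagonal k with a.1 ∈ Set.Ioo 0 k, (-1) ^ a.1 * newtonESymm t a.1 * t a.2 := by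
  obtain ⟨k, rfl⟩ := Nat.exists_eq_succ_of_ne_zero hk.ne'
  rw [Nat.succ_eq_add_one, newtonESymm,
    sum_attach _ (fun a : ℕ × ℕ => (-1) ^ a.1 * newtonESymm t a.1 * t a.2)]
  have h0 : ((k + 1 : ℕ) : ℂ) ≠ 0 := by exact_mod_cast k.succ_ne_zero
  have h1 : ((-1 : ℂ) ^ (k + 1 + 1)) * (-1) ^ (k + 1 + 1) = 1 := by
    rw [← mul_pow]; simp
  generalize ∑ a ∈ antidiagonal (k + 1) with a.1 ∈ Set.Ioo 0 (k + 1),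
    (-1) ^ a.1 * newtonESymm t a.1 * t a.2 = S
  generalize ((-1 : ℂ) ^ (k + 1 + 1)) = s at *
  have : s * ((k + 1 : ℕ) : ℂ) * (s * ((k + 1 : ℕ) : ℂ)⁻¹ * (t (k + 1) + S))
      = (s * s) * (((k + 1 : ℕ) : ℂ) * ((k + 1 : ℕ) : ℂ)⁻¹) * (t (k + 1) + S) := by ring
  rw [this, h1, mul_inv_cancel₀ h0]
  ring

/-- Over `ℂ` the elementary symmetric polynomials take arbitrary prescribed values. -/
lemma exists_esymm_values (n : ℕ) (e : ℕ → ℂ) (he : e 0 = 1) :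
    ∃ x : Fin n → ℂ, ∀ k ≤ n, aeval x (esymm (Fin n) ℂ k) = e k := by
  set P : Polynomial ℂ :=
    ∑ i ∈ Finset.range (n + 1), Polynomial.monomial i ((-1) ^ (n - i) * e (n - i)) with hP
  have hcoeff : ∀ i ≤ n, P.coeff i = (-1) ^ (n - i) * e (n - i) := by
    intro i hi
    simp only [hP, Polynomial.finsetSum_coeff, Polynomial.coeff_monomial]
    rw [Finset.sum_ite_eq' (Finset.range (n + 1)) i, if_pos (Finset.mem_range.2 (by omega))]
  have hle : P.natDegree ≤ n := by
    refine Polynomial.natDegree_sum_le_of_forall_le _ _ fun i hi => ?_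
    exact (Polynomial.natDegree_monomial_le _).trans (by have := Finset.mem_range.1 hi; omega)
  have hn : P.coeff n = 1 := by simp [hcoeff n le_rfl, he]
  have hmonic : P.Monic := Polynomial.monic_of_natDegree_le_of_coeff_eq_one n hle hn
  have hdeg : P.natDegree = n :=
    Polynomial.natDegree_eq_of_le_of_coeff_ne_zero hle (by simp [hn])
  have hcard : P.roots.card = P.natDegree := IsAlgClosed.card_roots_eq_natDegree
  have hlen : P.roots.toList.length = n := by simp [hcard, hdeg]
  refine ⟨fun i => P.roots.toList.get (i.cast hlen.symm), fun k hk => ?_⟩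
  have hroots : Finset.univ.val.map (fun i : Fin n => P.roots.toList.get (i.cast hlen.symm))
      = P.roots := by
    conv_rhs => rw [← P.roots.coe_toList]
    generalize P.roots.toList = L at *
    subst hlen
    simp [Fin.univ_val_map]
  have h := Polynomial.coeff_eq_esymm_roots_of_card hcard (k := n - k) (by omega)
  rw [hcoeff _ (by omega), hmonic.leadingCoeff, hdeg, Nat.sub_sub_self hk, one_mul] at h
  rw [aeval_esymm_eq_multiset_esymm, hroots]
  exact (mul_left_cancel₀ (pow_ne_zero _ (by norm_num)) h).symm

/-- The power sum map `ℂⁿ → ℂⁿ` is surjective. -/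
lemma exists_power_sums (n : ℕ) (t : Fin n → ℂ) :
    ∃ x : Fin n → ℂ, ∀ l : Fin n, ∑ i, x i ^ ((l : ℕ) + 1) = t l := by
  -- `s k` is the prescribed value of the `k`-th power sum, for `1 ≤ k ≤ n`
  let s : ℕ → ℂ := fun k => if h : k - 1 < n then t ⟨k - 1, h⟩ else 0
  obtain ⟨x, hx⟩ := exists_esymm_values n (newtonESymm s) (by rw [newtonESymm])
  have key : ∀ k, 0 < k → k ≤ n → aeval x (psum (Fin n) ℂ k) = s k := by
    intro k
    induction k using Nat.strong_induction_on with
    | _ k ih =>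
      intro hk hkn
      rw [psum_eq_mul_esymm_sub_sum _ _ k hk, newtonESymm_spec s k hk]
      simp only [map_sub, map_mul, map_pow, map_neg, map_one, map_natCast, map_sum]
      rw [hx k hkn]
      congr 1
      refine Finset.sum_congr rfl fun a ha => ?_
      obtain ⟨h1, h2, h3⟩ := Finset.mem_filter.1 ha
      rw [Finset.HasAntidiagonal.mem_antidiagonal] at h1
      rw [hx a.1 (by omega), ih a.2 (by omega) (by omega) (by omega)]
  refine ⟨x, fun l => ?_⟩
  have h := key (l + 1) (by omega) (by omega)
  simpa [psum, s] using h

lemma exists_even_power_sums (n : ℕ) (t : Fin n → ℂ) :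
    ∃ x : Fin n → ℂ, ∀ l : Fin n, ∑ i, x i ^ (2 * ((l : ℕ) + 1)) = t l := by
  obtain ⟨y, hy⟩ := exists_power_sums n t
  choose x hx using fun i => IsAlgClosed.exists_pow_nat_eq (y i) two_pos
  refine ⟨x, fun l => ?_⟩
  rw [← hy l]
  exact Finset.sum_congr rfl fun i _ => by rw [pow_mul, hx i]

/-- Weakly increasing sequences of naturals are Zariski dense; the lower bound `c` is what makes
the induction on the number of variables work. -/
lemma eq_zero_of_forall_monotone (n : ℕ) (c : ℕ) (p : MvPolynomial (Fin n) ℂ)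
    (h : ∀ x : Fin n → ℕ, Monotone x → (∀ i, c ≤ x i) → eval (fun i => (x i : ℂ)) p = 0) :
    p = 0 := by
  induction n generalizing c with
  | zero =>
    refine MvPolynomial.funext fun x => ?_
    rw [map_zero, ← h 0 (fun _ _ _ => le_rfl) finZeroElim]
    congr 2
    exact Subsingleton.elim _ _
  | succ n ih =>
    apply (finSuccEquiv ℂ n).injective
    rw [map_zero]
    apply Polynomial.eq_zero_of_infinite_isRoot
    have hinj : Function.Injective (fun r : ℕ => (C (r : ℂ) : MvPolynomial (Fin n) ℂ)) :=
      (C_injective (Fin n) ℂ).comp Nat.cast_injective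
    refine ((Set.Ici_infinite c).image hinj.injOn).mono ?_
    rintro _ ⟨r, hr, rfl⟩
    refine ih r _ fun x hx hrx => ?_
    rw [eval_polynomial_eval_finSuccEquiv, eval_C]
    have hmono : Monotone (Fin.cons r x : Fin (n + 1) → ℕ) := by
      intro i j hij
      induction i using Fin.cases with
      | zero =>
        induction j using Fin.cases with
        | zero => exact le_rfl
        | succ j => simpa using hrx j
      | succ i =>
        induction j using Fin.cases with
        | zero => exact absurd hij (by simp)
        | succ j => simpa using hx (Fin.succ_le_succ_iff.1 hij)
    have hc : ∀ i, c ≤ (Fin.cons r x : Fin (n + 1) → ℕ) i := by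
      intro i
      induction i using Fin.cases with
      | zero => simpa using hr
      | succ i => simpa using (Set.mem_Ici.1 hr).trans (hrx i)
    rw [← h _ hmono hc]
    congr 2
    funext i
    induction i using Fin.cases <;> simp

/-- Position of each `jᵢ` (left) and `kᵢ` (right) in the interlacing chain listed in increasing
order `j_{m-1} ≤ k_{m-2} ≤ j_{m-2} ≤ ⋯ ≤ k₀ ≤ j₀`, with `0`-based indices. -/
def chainPos (m : ℕ) : Fin m ⊕ Fin (m - 1) → Fin (2 * m - 1) :=
  Sum.elim (fun i => ⟨2 * (m - 1 - i), by omega⟩) (fun i => ⟨2 * (m - 1 - i) - 1, by omega⟩)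

lemma chainPos_injective (m : ℕ) : Function.Injective (chainPos m) := by
  rintro (i | i) (j | j) h <;> simp only [chainPos, Sum.elim_inl, Sum.elim_inr, Fin.mk.injEq] at h
  · congr 1; ext; omega
  · omega
  · omega
  · congr 1; ext; omega

/-- Let `m ≥ 1` and let `f` be a complex polynomial in `2m−1` variables (indexed here by
`Fin m ⊕ Fin (m−1)`). Suppose that
`f(Σ Aᵢ², Σ Aᵢ⁴, …, Σ Aᵢ^{2m}, Σ Bᵢ², …, Σ Bᵢ^{2m−2}) = 0`
whenever `Aᵢ = 2jᵢ + 4(m−i) + 1` (`1 ≤ i ≤ m`) and `Bᵢ = 2kᵢ + 4(m−i) + 1`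
(`1 ≤ i ≤ m−1`) for natural numbers with
`j₁ ≥ k₁ ≥ j₂ ≥ k₂ ≥ ⋯ ≥ j_{m−1} ≥ k_{m−1} ≥ jₘ ≥ 0`. Then `f = 0`.
(Here the index `i : Fin m` is `0`-based, so `i` stands for `i+1` and
`m − (i+1) = m − 1 − i`.) -/
theorem stmt_17 (m : ℕ) (hm : 1 ≤ m) (f : MvPolynomial (Fin m ⊕ Fin (m - 1)) ℂ)
    (hf : ∀ j : Fin m → ℕ, ∀ k : Fin (m - 1) → ℕ,
      (∀ i : Fin (m - 1), k i ≤ j ⟨(i : ℕ), lt_of_lt_of_le i.isLt (Nat.sub_le m 1)⟩) →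
      (∀ i : Fin (m - 1), j ⟨(i : ℕ) + 1, Nat.add_lt_of_lt_sub i.isLt⟩ ≤ k i) →
      eval (Sum.elim
        (fun l : Fin m => ∑ i : Fin m,
          ((2 * j i + 4 * (m - 1 - (i : ℕ)) + 1 : ℕ) : ℂ) ^ (2 * ((l : ℕ) + 1)))
        (fun l : Fin (m - 1) => ∑ i : Fin (m - 1),
          ((2 * k i + 4 * (m - 1 - (i : ℕ)) + 1 : ℕ) : ℂ) ^ (2 * ((l : ℕ) + 1)))) f = 0) :
    f = 0 := by
  -- `F` is `f` at the even power sums of `Aᵢ` and `Bᵢ`, with one free variable per chain entry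
  let d : Fin m ⊕ Fin (m - 1) → ℕ :=
    Sum.elim (fun i => 4 * (m - 1 - (i : ℕ)) + 1) (fun i => 4 * (m - 1 - (i : ℕ)) + 1)
  let v : Fin m ⊕ Fin (m - 1) → MvPolynomial (Fin (2 * m - 1)) ℂ := fun s =>
    C 2 * X (chainPos m s) + C (d s : ℂ)
  let F : MvPolynomial (Fin (2 * m - 1)) ℂ := bind₁ (Sum.elim
    (fun l : Fin m => ∑ i : Fin m, v (Sum.inl i) ^ (2 * ((l : ℕ) + 1)))
    (fun l : Fin (m - 1) => ∑ i : Fin (m - 1), v (Sum.inr i) ^ (2 * ((l : ℕ) + 1)))) f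
  have hF : ∀ x : Fin (2 * m - 1) → ℂ, eval x F = eval (Sum.elim
      (fun l : Fin m => ∑ i : Fin m, eval x (v (Sum.inl i)) ^ (2 * ((l : ℕ) + 1)))
      (fun l : Fin (m - 1) =>
        ∑ i : Fin (m - 1), eval x (v (Sum.inr i)) ^ (2 * ((l : ℕ) + 1)))) f := by
    intro x
    simp only [F, eval, eval₂Hom_bind₁]
    congr 2
    funext s
    rcases s with l | l <;> simp
  have hF0 : F = 0 := by
    refine eq_zero_of_forall_monotone _ 0 F fun x hx _ => ?_
    rw [hF, ← hf (fun i => x (chainPos m (Sum.inl i))) (fun i => x (chainPos m (Sum.inr i)))]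
    · congr 2
      funext s
      rcases s with l | l <;> simp [v, d, add_assoc]
    · intro i
      apply hx
      simp only [chainPos, Sum.elim_inl, Sum.elim_inr, Fin.mk_le_mk]
      omega
    · intro i
      apply hx
      simp only [chainPos, Sum.elim_inl, Sum.elim_inr, Fin.mk_le_mk]
      omega
  refine MvPolynomial.funext fun t => ?_
  obtain ⟨a, ha⟩ := exists_even_power_sums m (fun l => t (Sum.inl l))
  obtain ⟨b, hb⟩ := exists_even_power_sums (m - 1) (fun l => t (Sum.inr l))
  -- solve the affine equations for the chain entries
  obtain ⟨x, hx⟩ : ∃ x : Fin (2 * m - 1) → ℂ, ∀ s, eval x (v s) = Sum.elim a b s := by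
    refine ⟨Function.extend (chainPos m) (fun s => (Sum.elim a b s - (d s : ℂ)) / 2) 0,
      fun s => ?_⟩
    simp only [v, map_add, map_mul, eval_C, eval_X, (chainPos_injective m).extend_apply]
    ring
  have h := hF x
  simp only [hF0, map_zero, hx, Sum.elim_inl, Sum.elim_inr, ha, hb] at h
  rw [map_zero, h]
  congr 2
  funext s
  rcases s with l | l <;> rfl
end

section
/- Let f be a complex polynomial in three variables. Suppose that f(j² + 6j, j'² + 6j', (3/4)·a·(a+6)) = 0 for all natural numbers j, j', a satisfying |j − j'| ≤ a ≤ j + j' and j + j' − a even. Then f is the zero polynomial. -/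
open MvPolynomial

/-!
The admissible triples are exactly `(j, j', a) = (y + z, x + z, x + y)` with `x, y, z ∈ ℕ`.
Substituting this parametrization into `f` gives a polynomial in `x, y, z` vanishing on `ℕ³`, which
is therefore zero (`MvPolynomial.funext_set`). So `f` vanishes on the image of the polynomial map
`ℂ³ → ℂ³` given by `(x, y, z) ↦ (j² + 6j, j'² + 6j', (3/4)a(a + 6))`. This map is surjective:
`(x, y, z) ↦ (j, j', a)` is an invertible linear map over `ℂ`, and each quadratic is onto `ℂ`
(complete the square). Hence `f` vanishes on all of `ℂ³`, and `f = 0`.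
-/

/-- The map `(x, y, z) ↦ (j² + 6j, j'² + 6j', (3/4)a(a + 6))` as a triple of polynomials, where
`(j, j', a) = (y + z, x + z, x + y)` and `x, y, z` are the variables `X 0, X 1, X 2`. -/
noncomputable def casimirSubst : Fin 3 → MvPolynomial (Fin 3) ℂ :=
  ![(X 1 + X 2) ^ 2 + 6 * (X 1 + X 2), (X 0 + X 2) ^ 2 + 6 * (X 0 + X 2),
    C (3 / 4) * (X 0 + X 1) * ((X 0 + X 1) + 6)]

lemma eval_bind₁_casimirSubst (f : MvPolynomial (Fin 3) ℂ) (x : Fin 3 → ℂ) :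
    eval x (bind₁ casimirSubst f) =
      eval ![(x 1 + x 2) ^ 2 + 6 * (x 1 + x 2), (x 0 + x 2) ^ 2 + 6 * (x 0 + x 2),
        (3 / 4 : ℂ) * (x 0 + x 1) * ((x 0 + x 1) + 6)] f := by
  have h : eval x (bind₁ casimirSubst f) = eval (fun i => eval x (casimirSubst i)) f :=
    eval₂Hom_bind₁ _ _ _ _
  rw [h]
  congr 2
  funext i
  fin_cases i <;> simp [casimirSubst]

/-- Let `f` be a complex polynomial in three variables. If
`f(j² + 6j, j'² + 6j', (3/4)·a·(a+6)) = 0` for all natural numbers `j, j', a` with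
`|j − j'| ≤ a ≤ j + j'` and `j + j' − a` even, then `f = 0`. -/
theorem stmt_18 (f : MvPolynomial (Fin 3) ℂ)
    (hf : ∀ j j' a : ℕ, ((j : ℤ) - (j' : ℤ)).natAbs ≤ a → a ≤ j + j' →
      Even (j + j' - a) →
      eval ![(j : ℂ) ^ 2 + 6 * (j : ℂ), (j' : ℂ) ^ 2 + 6 * (j' : ℂ),
        (3 / 4 : ℂ) * (a : ℂ) * ((a : ℂ) + 6)] f = 0) :
    f = 0 := by
  have hg : bind₁ casimirSubst f = 0 := by
    refine funext_set (fun _ => Set.range ((↑) : ℕ → ℂ))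
      (fun _ => Set.infinite_range_of_injective Nat.cast_injective) fun x hx => ?_
    obtain ⟨k, hk⟩ := hx 0 trivial
    obtain ⟨l, hl⟩ := hx 1 trivial
    obtain ⟨m, hm⟩ := hx 2 trivial
    have h := hf (l + m) (k + m) (k + l) (by omega) (by omega) ⟨m, by omega⟩
    rw [eval_bind₁_casimirSubst, ← hk, ← hl, ← hm, map_zero]
    exact_mod_cast h
  refine MvPolynomial.funext fun u => ?_
  -- Square roots completing the square: `j = r - 3`, `j' = s - 3`, `a = t - 3`.
  obtain ⟨r, hr⟩ := IsAlgClosed.exists_pow_nat_eq (u 0 + 9) two_pos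
  obtain ⟨s, hs⟩ := IsAlgClosed.exists_pow_nat_eq (u 1 + 9) two_pos
  obtain ⟨t, ht⟩ := IsAlgClosed.exists_pow_nat_eq (4 / 3 * u 2 + 9) two_pos
  have h := eval_bind₁_casimirSubst f
    ![(s + t - r - 3) / 2, (r + t - s - 3) / 2, (r + s - t - 3) / 2]
  rw [hg, map_zero] at h
  rw [map_zero, h]
  congr 2
  funext i
  fin_cases i
  · simp
    linear_combination -hr
  · simp
    linear_combination -hs
  · simp
    linear_combination -(3 / 4 : ℂ) * ht
end

section
/- Let n ≥ 1 and let f be a complex polynomial in two variables. Suppose that f((k+ℓ)(k+ℓ+2n), −i·(k−ℓ)) = 0 for all natural numbers k, ℓ, where i denotes the imaginary unit. Then f is the zero polynomial. -/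
open MvPolynomial

/-!
Pull `f` back along the polynomial map `φ(k, l) = ((k+l)(k+l+2n), -i(k-l))` of `ℂ²`. The pullback
vanishes on the grid `ℕ × ℕ`, a product of infinite sets, hence it is the zero polynomial.
Since `φ : ℂ² → ℂ²` is surjective (solve a quadratic equation for `k + l`, a linear one for
`k - l`), `f` vanishes everywhere on `ℂ²`, so `f = 0`.
-/

/-- Let `n ≥ 1` and let `f` be a complex polynomial in two variables. If
`f((k+ℓ)(k+ℓ+2n), −i·(k−ℓ)) = 0` for all natural numbers `k, ℓ` (where `i` is the
imaginary unit), then `f = 0`. -/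
theorem stmt_19 (n : ℕ) (hn : 1 ≤ n) (f : MvPolynomial (Fin 2) ℂ)
    (hf : ∀ k l : ℕ,
      eval ![((k : ℂ) + (l : ℂ)) * ((k : ℂ) + (l : ℂ) + 2 * (n : ℂ)),
        -Complex.I * ((k : ℂ) - (l : ℂ))] f = 0) :
    f = 0 := by
  let φ : Fin 2 → MvPolynomial (Fin 2) ℂ :=
    ![(X 0 + X 1) * (X 0 + X 1 + C (2 * (n : ℂ))), C (-Complex.I) * (X 0 - X 1)]
  have eval_pullback (x : Fin 2 → ℂ) : eval x (bind₁ φ f) =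
      eval ![(x 0 + x 1) * (x 0 + x 1 + 2 * (n : ℂ)), -Complex.I * (x 0 - x 1)] f := by
    rw [← coe_aeval_eq_eval, RingHom.coe_coe, aeval_bind₁, ← coe_aeval_eq_eval, RingHom.coe_coe]
    congr 2
    funext j
    fin_cases j <;> simp [φ]
  have pullback_zero : bind₁ φ f = 0 := by
    refine funext_set (fun _ => Set.range (Nat.cast : ℕ → ℂ))
      (fun _ => Set.infinite_range_of_injective Nat.cast_injective) fun x hx => ?_
    obtain ⟨k, hk⟩ := hx 0 (Set.mem_univ _)
    obtain ⟨l, hl⟩ := hx 1 (Set.mem_univ _)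
    rw [eval_pullback, ← hk, ← hl, hf, map_zero]
  refine MvPolynomial.funext fun y => ?_
  -- Completing the square: `k + l = t - n` solves `(k + l) * (k + l + 2 * n) = y 0`.
  obtain ⟨t, ht⟩ := IsAlgClosed.exists_pow_nat_eq (y 0 + (n : ℂ) ^ 2) (n := 2) two_pos
  have h := eval_pullback
    ![(t - n + Complex.I * y 1) / 2, (t - n - Complex.I * y 1) / 2]
  rw [pullback_zero, map_zero] at h
  rw [map_zero, h]
  congr 2
  funext j
  fin_cases j
  · simp
    linear_combination -ht
  · simp
    linear_combination y 1 * Complex.I_sq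
end
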